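/- arXiv:0902.4589 — 2 statements merged into one kernel-verified Lean document; each statement's English description precedes it below -/
import Mathlib

section
/- Let m, n be positive integers with 3 ≤ n ≤ m, let K ∈ P(m,n), and let A be a K-primitive matrix. Then γ(A) ≤ (n−1)(m−1) + 1. -/
open Matrix Set Real

noncomputable section

/-- A proper cone in `ℝ^n`: a closed convex cone that is pointed and full. -/
def IsProperCone {n : ℕ} (K : Set (Fin n → ℝ)) : Prop :=
  IsClosed K ∧ (∀ x ∈ K, ∀ y ∈ K, x + y ∈ K) ∧
    (∀ (c : ℝ), 0 ≤ c → ∀ x ∈ K, c • x ∈ K) ∧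
    K ∩ (-K) = {0} ∧ (interior K).Nonempty

/-- The positive hull (cone generated by) finitely many vectors. -/
def ConeGen {n m : ℕ} (y : Fin m → Fin n → ℝ) : Set (Fin n → ℝ) :=
  {x | ∃ c : Fin m → ℝ, (∀ j, 0 ≤ c j) ∧ x = ∑ j, c j • y j}

/-- A polyhedral cone: a proper cone that is the positive hull of finitely many vectors. -/
def IsPolyhedralCone {n : ℕ} (K : Set (Fin n → ℝ)) : Prop :=
  IsProperCone K ∧ ∃ (m : ℕ) (y : Fin m → Fin n → ℝ), K = ConeGen y

/-- `A` is `K`-nonnegative: `A K ⊆ K`. -/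
def KNonneg {n : ℕ} (K : Set (Fin n → ℝ)) (A : Matrix (Fin n) (Fin n) ℝ) : Prop :=
  ∀ x ∈ K, A.mulVec x ∈ K

/-- `A` is `K`-positive: `A` maps `K \ {0}` into the interior of `K`. -/
def KPositive {n : ℕ} (K : Set (Fin n → ℝ)) (A : Matrix (Fin n) (Fin n) ℝ) : Prop :=
  ∀ x ∈ K, x ≠ 0 → A.mulVec x ∈ interior K

/-- `A` is `K`-primitive: `A` is `K`-nonnegative and some power of `A` is `K`-positive. -/
def KPrimitive {n : ℕ} (K : Set (Fin n → ℝ)) (A : Matrix (Fin n) (Fin n) ℝ) : Prop :=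
  KNonneg K A ∧ ∃ k : ℕ, 0 < k ∧ KPositive K (A ^ k)

/-- The exponent `γ(A)` of a `K`-primitive matrix: the least `k ≥ 1` with `A^k` `K`-positive. -/
def expnt {n : ℕ} (K : Set (Fin n → ℝ)) (A : Matrix (Fin n) (Fin n) ℝ) : ℕ :=
  sInf {k : ℕ | 0 < k ∧ KPositive K (A ^ k)}

/-- `x` is an extreme vector of `K`. -/
def IsExtremeVec {n : ℕ} (K : Set (Fin n → ℝ)) (x : Fin n → ℝ) : Prop :=
  x ∈ K ∧ x ≠ 0 ∧ ∀ y ∈ K, ∀ z ∈ K, x = y + z →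
    (∃ a : ℝ, 0 ≤ a ∧ y = a • x) ∧ (∃ b : ℝ, 0 ≤ b ∧ z = b • x)

/-- The set of extreme rays of `K`. -/
def ExtremeRays {n : ℕ} (K : Set (Fin n → ℝ)) : Set (Set (Fin n → ℝ)) :=
  {R | ∃ x, IsExtremeVec K x ∧ R = {y | ∃ c : ℝ, 0 ≤ c ∧ y = c • x}}

/-- `K ∈ P(m,n)`: an `n`-dimensional polyhedral cone in `ℝ^n` with exactly `m` extreme rays.
(A proper cone in `ℝ^n` has nonempty interior, hence is automatically `n`-dimensional.) -/
def MemP {n : ℕ} (m : ℕ) (K : Set (Fin n → ℝ)) : Prop :=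
  IsPolyhedralCone K ∧ (ExtremeRays K).ncard = m

/-- A face of a cone `K`. -/
def IsFace {n : ℕ} (K F : Set (Fin n → ℝ)) : Prop :=
  0 ∈ F ∧ F ⊆ K ∧ (∀ x ∈ F, ∀ y ∈ F, x + y ∈ F) ∧
    (∀ (c : ℝ), 0 ≤ c → ∀ x ∈ F, c • x ∈ F) ∧
    ∀ x ∈ F, ∀ y ∈ K, x - y ∈ K → y ∈ F

/-- `A` is `K`-irreducible: `A` is `K`-nonnegative and leaves invariant no nontrivial face. -/
def KIrreducible {n : ℕ} (K : Set (Fin n → ℝ)) (A : Matrix (Fin n) (Fin n) ℝ) : Prop :=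
  KNonneg K A ∧ ∀ F : Set (Fin n → ℝ), IsFace K F → (∀ x ∈ F, A.mulVec x ∈ F) →
    F = ({0} : Set (Fin n → ℝ)) ∨ F = K

/-- Combinatorial lemma on iterates of a non-injective self-map. -/
theorem aux_rho {V : Type*} [Fintype V] (h : V → V) (hni : ¬ Function.Injective h) (j : V) :
    ∃ t s : ℕ, 0 < s ∧ t + s ≤ Fintype.card V ∧ s + 1 ≤ Fintype.card V ∧
      h^[s] (h^[t] j) = h^[t] j := by
  classical
  set M := Fintype.card V with hM
  by_cases hi : Function.Injective (fun i : Fin M => h^[(i : ℕ)] j)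
  · have hb : Function.Bijective (fun i : Fin M => h^[(i : ℕ)] j) :=
      (Fintype.bijective_iff_injective_and_card _).2 ⟨hi, by simp [hM]⟩
    obtain ⟨i, hi2⟩ := hb.2 (h^[M] j)
    simp only at hi2
    have hlt := i.2
    rcases Nat.eq_zero_or_pos (i : ℕ) with h0 | h0
    · exfalso
      apply hni
      apply Finite.injective_iff_surjective.2
      intro y
      obtain ⟨k, hk⟩ := hb.2 y
      simp only at hk
      rcases Nat.eq_zero_or_pos (k : ℕ) with k0 | k0
      · refine ⟨h^[M - 1] j, ?_⟩
        rw [← Function.iterate_succ_apply' h, Nat.succ_eq_add_one, Nat.sub_add_cancel (by omega), ← hi2, h0, ← hk, k0]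
      · refine ⟨h^[(k : ℕ) - 1] j, ?_⟩
        rw [← Function.iterate_succ_apply' h, Nat.succ_eq_add_one, Nat.sub_add_cancel (by omega), hk]
    · refine ⟨i, M - i, by omega, by omega, by omega, ?_⟩
      rw [← Function.iterate_add_apply, Nat.sub_add_cancel (by omega), hi2]
  · simp only [Function.Injective, not_forall] at hi
    obtain ⟨a, b, hab, hne⟩ := hi
    have hne' : (a : ℕ) ≠ b := fun h => hne (Fin.ext h)
    have ha := a.2
    have hb := b.2
    rcases lt_or_gt_of_ne hne' with hl | hl
    · refine ⟨a, b - a, by omega, by omega, by omega, ?_⟩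
      rw [← Function.iterate_add_apply, Nat.sub_add_cancel (by omega), hab]
    · refine ⟨b, a - b, by omega, by omega, by omega, ?_⟩
      rw [← Function.iterate_add_apply, Nat.sub_add_cancel (by omega), hab]

section
variable {n : ℕ} {K : Set (Fin n → ℝ)} {A : Matrix (Fin n) (Fin n) ℝ}

theorem aux_int_add (hadd : ∀ x ∈ K, ∀ y ∈ K, x + y ∈ K) {x y : Fin n → ℝ}
    (hx : x ∈ interior K) (hy : y ∈ K) : x + y ∈ interior K := by
  have ho : IsOpen ((fun z => z - y) ⁻¹' interior K) :=
    isOpen_interior.preimage (by fun_prop)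
  refine mem_interior.2 ⟨_, ?_, ho, ?_⟩
  · intro z hz
    have := hadd _ (interior_subset hz) _ hy
    simpa using this
  · simpa using hx

theorem aux_int_smul (hsm : ∀ (c : ℝ), 0 ≤ c → ∀ x ∈ K, c • x ∈ K) {x : Fin n → ℝ}
    (hx : x ∈ interior K) {c : ℝ} (hc : 0 < c) : c • x ∈ interior K := by
  have ho : IsOpen ((fun z : Fin n → ℝ => c⁻¹ • z) ⁻¹' interior K) :=
    isOpen_interior.preimage (by fun_prop)
  refine mem_interior.2 ⟨_, ?_, ho, ?_⟩
  · intro z hz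
    have := hsm c hc.le _ (interior_subset hz)
    simpa [smul_smul, hc.ne'] using this
  · simpa [smul_smul, hc.ne'] using hx

/-- If `x` dominates a positive multiple of an interior point, it is interior. -/
theorem aux_int_dom (hadd : ∀ x ∈ K, ∀ y ∈ K, x + y ∈ K)
    (hsm : ∀ (c : ℝ), 0 ≤ c → ∀ x ∈ K, c • x ∈ K) {x z : Fin n → ℝ}
    (hz : z ∈ interior K) {c : ℝ} (hc : 0 < c) (h : x - c • z ∈ K) : x ∈ interior K := by
  have := aux_int_add hadd (aux_int_smul hsm hz hc) h
  simpa using this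

/-- An interior point absorbs. -/
theorem aux_int_absorb {x : Fin n → ℝ} (hx : x ∈ interior K) (u : Fin n → ℝ) :
    ∃ c : ℝ, 0 < c ∧ x - c • u ∈ K ∧ x + c • u ∈ K := by
  have ho : IsOpen ((fun c : ℝ => x - c • u) ⁻¹' interior K ∩
      (fun c : ℝ => x + c • u) ⁻¹' interior K) :=
    (isOpen_interior.preimage (by fun_prop)).inter (isOpen_interior.preimage (by fun_prop))
  obtain ⟨e, he, hb⟩ := Metric.isOpen_iff.1 ho 0 (by simp [hx])
  have := hb (show e / 2 ∈ Metric.ball (0 : ℝ) e by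
    simp [abs_of_pos he]; exact he)
  exact ⟨e / 2, by positivity, interior_subset this.1, interior_subset this.2⟩

theorem aux_pow_nonneg (hA : KNonneg K A) (k : ℕ) : KNonneg K (A ^ k) := by
  induction k with
  | zero => intro x hx; simpa using hx
  | succ k ih =>
    intro x hx
    rw [pow_succ, ← Matrix.mulVec_mulVec]
    exact ih _ (hA _ hx)

/-- `x ≥ c y` implies `A x ≥ c A y`. -/
theorem aux_dom_map (hA : KNonneg K A) {x y : Fin n → ℝ} {c : ℝ} (h : x - c • y ∈ K) :
    A *ᵥ x - c • (A *ᵥ y) ∈ K := by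
  have := hA _ h
  rwa [Matrix.mulVec_sub, Matrix.mulVec_smul] at this

theorem aux_int_step (hadd : ∀ x ∈ K, ∀ y ∈ K, x + y ∈ K)
    (hsm : ∀ (c : ℝ), 0 ≤ c → ∀ x ∈ K, c • x ∈ K)
    (hA : KPrimitive K A) {x : Fin n → ℝ} (hx : x ∈ interior K) (hx0 : x ≠ 0) :
    A *ᵥ x ∈ interior K := by
  obtain ⟨hN, p, hp, hP⟩ := hA
  obtain ⟨c, hc, h1, -⟩ := aux_int_absorb hx ((A ^ (p - 1)) *ᵥ x)
  have h2 := aux_dom_map hN h1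
  rw [Matrix.mulVec_mulVec, ← pow_succ', Nat.sub_add_cancel hp] at h2
  exact aux_int_dom hadd hsm (hP x (interior_subset hx) hx0) hc h2

theorem aux_int_zero (hpt : K ∩ (-K) = {0}) (hn : 0 < n) : (0 : Fin n → ℝ) ∉ interior K := by
  intro h
  obtain ⟨c, hc, h1, h2⟩ := aux_int_absorb h (fun _ => 1)
  have : c • (fun _ => (1 : ℝ)) ∈ K ∩ (-K) := by
    refine ⟨by simpa using h2, ?_⟩
    rw [Set.mem_neg]; simpa using h1
  rw [hpt] at this
  have h3 := congrFun (Set.mem_singleton_iff.1 this) ⟨0, hn⟩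
  simp at h3
  exact hc.ne' h3

theorem aux_int_pow (hadd : ∀ x ∈ K, ∀ y ∈ K, x + y ∈ K)
    (hsm : ∀ (c : ℝ), 0 ≤ c → ∀ x ∈ K, c • x ∈ K) (hpt : K ∩ (-K) = {0}) (hn : 0 < n)
    (hA : KPrimitive K A) {x : Fin n → ℝ} (hx : x ∈ interior K) (k : ℕ) :
    (A ^ k) *ᵥ x ∈ interior K := by
  induction k with
  | zero => simpa using hx
  | succ k ih =>
    rw [pow_succ', ← Matrix.mulVec_mulVec]
    exact aux_int_step hadd hsm hA ih (fun h => aux_int_zero hpt hn (h ▸ ih))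

/-- The lineal hull of the face generated by `x`. -/
def auxL (hadd : ∀ x ∈ K, ∀ y ∈ K, x + y ∈ K)
    (hsm : ∀ (c : ℝ), 0 ≤ c → ∀ x ∈ K, c • x ∈ K) (x : Fin n → ℝ) (hx : x ∈ K) :
    Submodule ℝ (Fin n → ℝ) where
  carrier := {u | ∃ e : ℝ, 0 < e ∧ e • x - u ∈ K ∧ e • x + u ∈ K}
  zero_mem' := ⟨1, one_pos, by simpa using hx, by simpa using hx⟩
  add_mem' := by
    rintro u v ⟨e, he, h1, h2⟩ ⟨f, hf, h3, h4⟩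
    refine ⟨e + f, by positivity, ?_, ?_⟩
    · convert hadd _ h1 _ h3 using 1; module
    · convert hadd _ h2 _ h4 using 1; module
  smul_mem' := by
    rintro c u ⟨e, he, h1, h2⟩
    refine ⟨|c| * e + 1, by positivity, ?_, ?_⟩
    · rcases abs_cases c with ⟨h, h'⟩ | ⟨h, h'⟩ <;> rw [h]
      · convert hadd _ (hsm c h' _ h1) _ hx using 1; module
      · convert hadd _ (hsm (-c) (by linarith) _ h2) _ hx using 1; module
    · rcases abs_cases c with ⟨h, h'⟩ | ⟨h, h'⟩ <;> rw [h]
      · convert hadd _ (hsm c h' _ h2) _ hx using 1; module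
      · convert hadd _ (hsm (-c) (by linarith) _ h1) _ hx using 1; module

theorem aux_mem_auxL (hadd : ∀ x ∈ K, ∀ y ∈ K, x + y ∈ K)
    (hsm : ∀ (c : ℝ), 0 ≤ c → ∀ x ∈ K, c • x ∈ K) {x : Fin n → ℝ} (hx : x ∈ K)
    {u : Fin n → ℝ} :
    u ∈ auxL hadd hsm x hx ↔ ∃ e : ℝ, 0 < e ∧ e • x - u ∈ K ∧ e • x + u ∈ K := Iff.rfl

theorem aux_chain (hadd : ∀ x ∈ K, ∀ y ∈ K, x + y ∈ K)
    (hsm : ∀ (c : ℝ), 0 ≤ c → ∀ x ∈ K, c • x ∈ K) (hpt : K ∩ (-K) = {0})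
    (hne : (interior K).Nonempty) (hn : 0 < n)
    {C : Matrix (Fin n) (Fin n) ℝ} (hC : KPrimitive K C) {x : Fin n → ℝ} (hx : x ∈ K)
    (hx0 : x ≠ 0) {c : ℝ} (hc : 0 < c) (hdom : C *ᵥ x - c • x ∈ K) :
    (C ^ (n - 1)) *ᵥ x ∈ interior K := by
  have hmem : ∀ k, (C ^ k) *ᵥ x ∈ K := fun k => aux_pow_nonneg hC.1 k x hx
  -- containing an interior point forces interior
  have hfin : ∀ (y) (hy : y ∈ K) (z), z ∈ interior K → z ∈ auxL hadd hsm y hy →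
      y ∈ interior K := by
    rintro y hy z hz ⟨e, he, h1, -⟩
    have := aux_int_add hadd hz h1
    have h2 : e • y ∈ interior K := by simpa using this
    have h3 := aux_int_smul hsm h2 (inv_pos.2 he)
    simpa [smul_smul, he.ne'] using h3
  have main : ∀ k, (C ^ k) *ᵥ x ∈ interior K ∨
      k + 1 ≤ Module.finrank ℝ (auxL hadd hsm _ (hmem k)) := by
    intro k
    induction k with
    | zero =>
      right
      have hxm : x ∈ auxL hadd hsm _ (hmem 0) := by
        refine ⟨1, one_pos, ?_, ?_⟩
        · have := hsm 0 le_rfl _ hx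
          simpa using this
        · have := hadd _ hx _ hx
          simpa using this
      have : auxL hadd hsm _ (hmem 0) ≠ ⊥ := by
        intro h
        rw [h, Submodule.mem_bot] at hxm
        exact hx0 hxm
      have := Submodule.one_le_finrank_iff.2 this
      simpa using this
    | succ k ih =>
      rcases ih with ih | ih
      · left
        rw [pow_succ', ← Matrix.mulVec_mulVec]
        exact aux_int_step hadd hsm hC ih (fun h => aux_int_zero hpt hn (h ▸ ih))
      by_cases hi : (C ^ k) *ᵥ x ∈ interior K
      · left
        rw [pow_succ', ← Matrix.mulVec_mulVec]
        exact aux_int_step hadd hsm hC hi (fun h => aux_int_zero hpt hn (h ▸ hi))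
      right
      have hle : auxL hadd hsm _ (hmem k) ≤ auxL hadd hsm _ (hmem (k + 1)) := by
        rintro u ⟨e, he, h1, h2⟩
        have hd := aux_dom_map (aux_pow_nonneg hC.1 k) hdom
        rw [Matrix.mulVec_mulVec, ← pow_succ] at hd
        have hd2 := hsm (e / c) (by positivity) _ hd
        have hee : (e / c * c) = e := by field_simp
        rw [smul_sub, smul_smul, hee] at hd2
        refine ⟨e / c, by positivity, ?_, ?_⟩
        · convert hadd _ hd2 _ h1 using 1; module
        · convert hadd _ hd2 _ h2 using 1; module
      have hneq : auxL hadd hsm _ (hmem k) ≠ auxL hadd hsm _ (hmem (k + 1)) := by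
        intro heq
        apply hi
        have hinv : ∀ u ∈ auxL hadd hsm _ (hmem k), C *ᵥ u ∈ auxL hadd hsm _ (hmem k) := by
          rintro u ⟨e, he, h1, h2⟩
          rw [heq]
          refine ⟨e, he, ?_, ?_⟩
          · have := hC.1 _ h1
            rwa [Matrix.mulVec_sub, Matrix.mulVec_smul, Matrix.mulVec_mulVec, ← pow_succ'] at this
          · have := hC.1 _ h2
            rwa [Matrix.mulVec_add, Matrix.mulVec_smul, Matrix.mulVec_mulVec, ← pow_succ'] at this
        have hself : ∀ N, (C ^ N) *ᵥ ((C ^ k) *ᵥ x) ∈ auxL hadd hsm _ (hmem k) := by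
          intro N
          induction N with
          | zero =>
            refine ⟨1, one_pos, ?_, ?_⟩
            · have := hsm 0 le_rfl _ hx
              simpa using this
            · have := hadd _ (hmem k) _ (hmem k)
              simpa using this
          | succ N ihN =>
            rw [pow_succ', ← Matrix.mulVec_mulVec]
            exact hinv _ ihN
        obtain ⟨p, hp, hP⟩ := hC.2
        refine hfin _ (hmem k) _ ?_ (hself p)
        rw [Matrix.mulVec_mulVec, ← pow_add, add_comm, pow_add, ← Matrix.mulVec_mulVec]
        exact aux_int_pow hadd hsm hpt hn hC (hP x hx hx0) k
      have := Submodule.finrank_lt_finrank_of_lt (lt_of_le_of_ne hle hneq)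
      omega
  rcases main (n - 1) with h | h
  · exact h
  · have htop : auxL hadd hsm _ (hmem (n - 1)) = ⊤ := by
      apply Submodule.eq_top_of_finrank_eq
      have h2 := Submodule.finrank_le (auxL hadd hsm _ (hmem (n - 1)))
      simp only [Module.finrank_fin_fun] at h2 ⊢
      omega
    obtain ⟨z, hz⟩ := hne
    exact hfin _ _ z hz (htop ▸ Submodule.mem_top)

theorem aux_prim_pow (hadd : ∀ x ∈ K, ∀ y ∈ K, x + y ∈ K)
    (hsm : ∀ (c : ℝ), 0 ≤ c → ∀ x ∈ K, c • x ∈ K) (hpt : K ∩ (-K) = {0}) (hn : 0 < n)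
    (hA : KPrimitive K A) {s : ℕ} (hs : 0 < s) : KPrimitive K (A ^ s) := by
  refine ⟨aux_pow_nonneg hA.1 s, ?_⟩
  obtain ⟨p, hp, hP⟩ := hA.2
  refine ⟨p, hp, fun x hx hx0 => ?_⟩
  have hps : p ≤ s * p := Nat.le_mul_of_pos_left p hs
  rw [← pow_mul, ← Nat.sub_add_cancel hps, pow_add, ← Matrix.mulVec_mulVec]
  exact aux_int_pow hadd hsm hpt hn hA (hP x hx hx0) _

/-- An extreme vector is not interior when `n ≥ 2`. -/
theorem aux_ext_not_int (hn : 2 ≤ n) (hsm : ∀ (c : ℝ), 0 ≤ c → ∀ x ∈ K, c • x ∈ K)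
    {x : Fin n → ℝ} (hx : IsExtremeVec K x) : x ∉ interior K := by
  intro hi
  obtain ⟨-, hx0, hx⟩ := hx
  have hall : ∀ u : Fin n → ℝ, ∃ a : ℝ, a • x = u := by
    intro u
    obtain ⟨c, hc, h1, h2⟩ := aux_int_absorb hi u
    obtain ⟨-, b, hb, hbx⟩ := hx ((1 / 2 : ℝ) • (x - c • u)) (hsm _ (by norm_num) _ h1)
      ((1 / 2 : ℝ) • (x + c • u)) (hsm _ (by norm_num) _ h2) (by module)
    refine ⟨c⁻¹ * (2 * b - 1), ?_⟩
    have : c • u = (2 * b - 1) • x := by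
      have h3 : (2 * b - 1) • x = (2 : ℝ) • (b • x) - x := by module
      rw [h3, ← hbx]; module
    rw [mul_smul, ← this, smul_smul, inv_mul_cancel₀ hc.ne', one_smul]
  have h1 : Module.finrank ℝ (Fin n → ℝ) ≤ 1 := finrank_le_one x hall
  simp at h1
  omega

/-- Every proper polyhedral cone is generated by a finite irredundant set. -/
theorem aux_gens (hK : IsPolyhedralCone K) :
    ∃ (P : Submodule {c : ℝ // 0 ≤ c} (Fin n → ℝ)) (S : Finset (Fin n → ℝ)),
      (P : Set (Fin n → ℝ)) = K ∧ Submodule.span {c : ℝ // 0 ≤ c} (S : Set (Fin n → ℝ)) = P ∧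
      ∀ y ∈ S, y ∉ Submodule.span {c : ℝ // 0 ≤ c} ((S : Set (Fin n → ℝ)) \ {y}) := by
  classical
  obtain ⟨-, M, y, hy⟩ := hK
  set P := Submodule.span {c : ℝ // 0 ≤ c} (Set.range y) with hP
  have hex : ∃ k, ∃ S : Finset (Fin n → ℝ), S.card = k ∧
      Submodule.span {c : ℝ // 0 ≤ c} (S : Set (Fin n → ℝ)) = P :=
    ⟨_, Finset.univ.image y, rfl, by simp [hP]⟩
  obtain ⟨S, hS, hSP⟩ := Nat.find_spec hex
  refine ⟨P, S, ?_, hSP, ?_⟩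
  · rw [hy]
    ext x
    simp only [SetLike.mem_coe, hP, Submodule.mem_span_range_iff_exists_fun, ConeGen,
      Set.mem_ofPred_eq]
    constructor
    · rintro ⟨c, hc⟩
      exact ⟨fun j => c j, fun j => (c j).2, hc.symm⟩
    · rintro ⟨c, hc, hx⟩
      exact ⟨fun j => ⟨c j, hc j⟩, hx.symm⟩
  · intro z hz hzs
    have hcard : (S.erase z).card < Nat.find hex := by
      rw [← hS]; exact Finset.card_erase_lt_of_mem hz
    refine Nat.find_min hex hcard ⟨_, rfl, ?_⟩
    rw [Finset.coe_erase, ← Submodule.span_insert_eq_span hzs, Set.insert_sdiff_singleton,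
      Set.insert_eq_of_mem (by simpa using hz), hSP]

end
/-- For `K ∈ P(m,n)` with `3 ≤ n ≤ m` and `A` `K`-primitive, `γ(A) ≤ (n-1)(m-1)+1`. -/
theorem stmt_2 (m n : ℕ) (hn : 3 ≤ n) (hnm : n ≤ m)
    (K : Set (Fin n → ℝ)) (A : Matrix (Fin n) (Fin n) ℝ)
    (hK : MemP m K) (hA : KPrimitive K A) :
    expnt K A ≤ (n - 1) * (m - 1) + 1 := by
  classical
  obtain ⟨hpoly, hcard⟩ := hK
  obtain ⟨P, S, hPK, hSP, hmin⟩ := aux_gens hpoly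
  obtain ⟨⟨-, hadd, hsm, hpt, hne⟩, -⟩ := hpoly
  have hn0 : 0 < n := by omega
  have hmemP : ∀ x, x ∈ P ↔ x ∈ K := fun x => by rw [← hPK]; rfl
  have h0K : (0 : Fin n → ℝ) ∈ K := (hmemP 0).1 P.zero_mem
  have hSK : ∀ y ∈ S, y ∈ K := fun y hy => by
    rw [← hmemP, ← hSP]; exact Submodule.subset_span hy
  have hsub : ∀ y, ∀ z ∈ Submodule.span {c : ℝ // 0 ≤ c} ((S : Set (Fin n → ℝ)) \ {y}), z ∈ K := by
    intro y z hz
    rw [← hmemP, ← hSP]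
    exact Submodule.span_mono Set.sdiff_subset hz
  have hS0 : ∀ y ∈ S, y ≠ 0 := by
    intro y hy h
    apply hmin y hy
    rw [h]; exact Submodule.zero_mem _
  -- pointedness
  have hpoint : ∀ u ∈ K, ∀ v ∈ K, u + v = 0 → u = 0 := by
    intro u hu v hv huv
    have : u ∈ K ∩ (-K) := ⟨hu, by rw [Set.mem_neg, neg_eq_of_add_eq_zero_right huv]; exact hv⟩
    rw [hpt] at this
    exact this
  -- decomposition with respect to a generator
  have hdec : ∀ y ∈ S, ∀ x ∈ K, ∃ a : ℝ, 0 ≤ a ∧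
      ∃ z ∈ Submodule.span {c : ℝ // 0 ≤ c} ((S : Set (Fin n → ℝ)) \ {y}), x = a • y + z := by
    intro y hy x hx
    rw [← hmemP, ← hSP, ← Set.insert_eq_of_mem (Finset.mem_coe.2 hy),
      ← Set.insert_sdiff_singleton, Submodule.mem_span_insert] at hx
    obtain ⟨a, z, hz, hxz⟩ := hx
    exact ⟨a, a.2, z, hz, hxz⟩
  -- generators are extreme
  have hext : ∀ y ∈ S, IsExtremeVec K y := by
    intro y hy
    refine ⟨hSK y hy, hS0 y hy, ?_⟩
    intro u hu w hw huw
    obtain ⟨a, ha, z, hz, rfl⟩ := hdec y hy u hu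
    obtain ⟨b, hb, z', hz', rfl⟩ := hdec y hy w hw
    have hzz := Submodule.add_mem _ hz hz'
    rcases lt_or_ge (a + b) 1 with hab | hab
    · exfalso
      apply hmin y hy
      have h1 : (1 - a - b) • y = z + z' := by
        have h2 : z + z' = (a • y + z + (b • y + z')) - (a + b) • y := by module
        rw [h2, ← huw]; module
      have h3 : y = (1 - a - b)⁻¹ • (z + z') := by
        rw [← h1, smul_smul, inv_mul_cancel₀ (by linarith), one_smul]
      rw [h3]
      rw [← h3]
      have h4 := Submodule.smul_mem _
        (⟨(1 - a - b)⁻¹, inv_nonneg.2 (by linarith)⟩ : {c : ℝ // 0 ≤ c}) hzz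
      have h5 : (⟨(1 - a - b)⁻¹, inv_nonneg.2 (by linarith)⟩ : {c : ℝ // 0 ≤ c}) • (z + z') = y :=
        h3.symm
      rwa [h5] at h4
    · have hz0 : (a + b - 1) • y + (z + z') = 0 := by
        have h2 : (a + b - 1) • y + (z + z') = (a • y + z + (b • y + z')) - y := by module
        rw [h2, ← huw, sub_self]
      have hyK := hsm (a + b - 1) (by linarith) y (hSK y hy)
      have hzK := hsub _ _ hz
      have hzK' := hsub _ _ hz'
      have e1 : z = 0 := hpoint z hzK _ (hadd _ hyK _ hzK') (by rw [← hz0]; abel)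
      have e2 : z' = 0 := hpoint z' hzK' _ (hadd _ hyK _ hzK) (by rw [← hz0]; abel)
      exact ⟨⟨a, ha, by rw [e1, add_zero]⟩, ⟨b, hb, by rw [e2, add_zero]⟩⟩
  -- cardinality
  have hSm : S.card ≤ m := by
    have hfin : (ExtremeRays K).Finite := by
      apply Set.finite_of_ncard_ne_zero; omega
    have hinj : Set.InjOn (fun x : Fin n → ℝ => {y | ∃ c : ℝ, 0 ≤ c ∧ y = c • x})
        (S : Set (Fin n → ℝ)) := by
      intro x hx y hy hxy
      by_contra hne'
      have hmem : x ∈ {z : Fin n → ℝ | ∃ c : ℝ, 0 ≤ c ∧ z = c • y} := by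
        rw [← show {z : Fin n → ℝ | ∃ c : ℝ, 0 ≤ c ∧ z = c • x} = {z | ∃ c : ℝ, 0 ≤ c ∧ z = c • y}
          from hxy]
        exact ⟨1, zero_le_one, (one_smul _ _).symm⟩
      obtain ⟨c, hc, hxc⟩ := hmem
      apply hmin x hx
      have h4 := Submodule.smul_mem (Submodule.span {c : ℝ // 0 ≤ c} ((S : Set (Fin n → ℝ)) \ {x}))
        (⟨c, hc⟩ : {c : ℝ // 0 ≤ c}) (Submodule.subset_span ⟨hy, fun h => hne' (h.symm)⟩)
      have h5 : (⟨c, hc⟩ : {c : ℝ // 0 ≤ c}) • y = x := hxc.symm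
      rwa [h5] at h4
    rw [← hcard, ← Set.ncard_coe_finset, ← Set.ncard_image_of_injOn hinj]
    apply Set.ncard_le_ncard _ hfin
    rintro _ ⟨x, hx, rfl⟩
    exact ⟨x, hext x hx, rfl⟩
  -- each nonzero element of a subcone dominates a generator
  have hdomin : ∀ T : Set (Fin n → ℝ), T ⊆ (S : Set (Fin n → ℝ)) →
      ∀ x ∈ Submodule.span {c : ℝ // 0 ≤ c} T, x ∈ K ∧ (x = 0 ∨ ∃ y ∈ T, ∃ c : ℝ, 0 < c ∧
        x - c • y ∈ K) := by
    intro T hT x hx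
    induction hx using Submodule.span_induction with
    | mem x hx => exact ⟨hSK _ (hT hx), Or.inr ⟨x, hx, 1, one_pos, by simpa using h0K⟩⟩
    | zero => exact ⟨h0K, Or.inl rfl⟩
    | add u v hu hv ihu ihv =>
      refine ⟨hadd _ ihu.1 _ ihv.1, ?_⟩
      rcases ihu.2 with h | ⟨y, hy, c, hc, h⟩
      · rw [h, zero_add]; exact ihv.2
      · right
        refine ⟨y, hy, c, hc, ?_⟩
        convert hadd _ h _ ihv.1 using 1; abel
    | smul a u hu ihu =>
      have hau : a • u = (a : ℝ) • u := rfl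
      rw [hau]
      refine ⟨hsm _ a.2 _ ihu.1, ?_⟩
      rcases ihu.2 with h | ⟨y, hy, c, hc, h⟩
      · left; rw [h, smul_zero]
      · rcases a.2.eq_or_lt with h0 | h0
        · left; rw [← h0, zero_smul]
        · right
          refine ⟨y, hy, a * c, mul_pos h0 hc, ?_⟩
          have := hsm _ a.2 _ h
          rwa [smul_sub, smul_smul] at this
  have hdomK : ∀ x ∈ K, x ≠ 0 → ∃ y ∈ S, ∃ c : ℝ, 0 < c ∧ x - c • y ∈ K := by
    intro x hx hx0
    rw [← hmemP, ← hSP] at hx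
    exact (hdomin _ subset_rfl x hx).2.resolve_left hx0
  -- `A` does not kill nonzero elements
  have hker : ∀ x ∈ K, x ≠ 0 → A *ᵥ x ≠ 0 := by
    intro x hx hx0 h
    obtain ⟨-, p, hp, hP⟩ := hA
    have h1 := hP x hx hx0
    rw [← Nat.sub_add_cancel hp, pow_succ, ← Matrix.mulVec_mulVec, h, Matrix.mulVec_zero] at h1
    exact aux_int_zero hpt hn0 h1
  -- some generator has a non-extreme image
  obtain ⟨w0, hw0⟩ : ∃ w : Fin n → ℝ, w ∈ S := by
    obtain ⟨z, hz⟩ := hne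
    obtain ⟨y, hy, -⟩ := hdomK z (interior_subset hz) (fun h => aux_int_zero hpt hn0 (h ▸ hz))
    exact ⟨y, hy⟩
  have hsucc : ∀ v : S, ∃ u : S, ∃ c : ℝ, 0 < c ∧ A *ᵥ (v : Fin n → ℝ) - c • (u : Fin n → ℝ) ∈ K := by
    intro v
    obtain ⟨y, hy, h⟩ := hdomK _ (hA.1 _ (hSK _ v.2)) (hker _ (hSK _ v.2) (hS0 _ v.2))
    exact ⟨⟨y, hy⟩, h⟩
  choose f hf using hsucc
  have hbranch : ∃ v b : S, b ≠ f v ∧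
      ∃ c : ℝ, 0 < c ∧ A *ᵥ (v : Fin n → ℝ) - c • (b : Fin n → ℝ) ∈ K := by
    by_contra hcon
    have hmul : ∀ v : S, ∃ a : ℝ, 0 < a ∧ A *ᵥ (v : Fin n → ℝ) = a • (f v : Fin n → ℝ) := by
      intro v
      obtain ⟨a, ha, z, hz, hxz⟩ := hdec (f v) (f v).2 _ (hA.1 _ (hSK _ v.2))
      have hz0 : z = 0 := by
        by_contra hz0
        obtain ⟨y, hy, c, hc, hyc⟩ := (hdomin _ Set.sdiff_subset z hz).2.resolve_left hz0
        apply hcon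
        refine ⟨v, ⟨y, hy.1⟩, fun h => hy.2 (by rw [← h]; rfl), c, hc, ?_⟩
        rw [hxz]
        have := hadd _ (hsm a ha _ (hSK _ (f v).2)) _ hyc
        rwa [← add_sub_assoc] at this
      rw [hz0, add_zero] at hxz
      refine ⟨a, lt_of_le_of_ne ha ?_, hxz⟩
      rintro rfl
      rw [zero_smul] at hxz
      exact hker _ (hSK _ v.2) (hS0 _ v.2) hxz
    have hmulk : ∀ k : ℕ, ∃ a : ℝ, 0 < a ∧ ∃ u : S, (A ^ k) *ᵥ w0 = a • (u : Fin n → ℝ) := by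
      intro k
      induction k with
      | zero => exact ⟨1, one_pos, ⟨w0, hw0⟩, by simp⟩
      | succ k ih =>
        obtain ⟨a, ha, u, hu⟩ := ih
        obtain ⟨b, hb, hbu⟩ := hmul u
        refine ⟨a * b, mul_pos ha hb, f u, ?_⟩
        rw [pow_succ', ← Matrix.mulVec_mulVec, hu, Matrix.mulVec_smul, hbu, smul_smul]
    obtain ⟨-, p, hp, hP⟩ := hA
    obtain ⟨a, ha, u, hu⟩ := hmulk p
    have h1 := hP w0 (hSK _ hw0) (hS0 _ hw0)
    rw [hu] at h1
    have h2 := aux_int_smul hsm h1 (inv_pos.2 ha)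
    rw [smul_smul, inv_mul_cancel₀ ha.ne', one_smul] at h2
    exact aux_ext_not_int (by omega) hsm (hext _ u.2) h2
  -- a non-injective successor function
  obtain ⟨g, hgni, hg⟩ : ∃ g : S → S, ¬ Function.Injective g ∧ ∀ v : S, ∃ c : ℝ, 0 < c ∧
      A *ᵥ (v : Fin n → ℝ) - c • (g v : Fin n → ℝ) ∈ K := by
    by_cases hfi : Function.Injective f
    · obtain ⟨v, b, hb, hvb⟩ := hbranch
      obtain ⟨w, hw⟩ := Finite.injective_iff_surjective.1 hfi b
      have hwv : w ≠ v := by rintro rfl; exact hb hw.symm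
      refine ⟨Function.update f v b, ?_, ?_⟩
      · intro hi
        apply hwv
        apply hi
        rw [Function.update_self, Function.update_of_ne hwv, hw]
      · intro u
        by_cases huv : u = v
        · subst huv; rw [Function.update_self]; exact hvb
        · rw [Function.update_of_ne huv]; exact hf u
    · exact ⟨f, hfi, hf⟩
  have hiter : ∀ (k : ℕ) (v : S), ∃ c : ℝ, 0 < c ∧
      (A ^ k) *ᵥ (v : Fin n → ℝ) - c • (g^[k] v : Fin n → ℝ) ∈ K := by
    intro k v
    induction k with
    | zero => exact ⟨1, one_pos, by simpa using h0K⟩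
    | succ k ih =>
      obtain ⟨c, hc, h1⟩ := ih
      obtain ⟨d, hd, h2⟩ := hg (g^[k] v)
      refine ⟨c * d, mul_pos hc hd, ?_⟩
      have h3 := aux_dom_map hA.1 h1
      have h4 := hsm c hc.le _ h2
      rw [Function.iterate_succ_apply', pow_succ', ← Matrix.mulVec_mulVec]
      convert hadd _ h3 _ h4 using 1; module
  -- the bound for generators
  have hgen : ∀ v : S, (A ^ ((n - 1) * (m - 1) + 1)) *ᵥ (v : Fin n → ℝ) ∈ interior K := by
    intro v
    obtain ⟨t, s, hs, hts, hs1, hcyc⟩ := aux_rho g hgni v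
    rw [Fintype.card_coe] at hts hs1
    obtain ⟨c, hc, h1⟩ := hiter t v
    obtain ⟨d, hd, h2⟩ := hiter s (g^[t] v)
    rw [hcyc] at h2
    have h3 := aux_chain hadd hsm hpt hne hn0 (aux_prim_pow hadd hsm hpt hn0 hA hs)
      (hSK _ (g^[t] v).2) (hS0 _ (g^[t] v).2) hd h2
    rw [← pow_mul] at h3
    have h4 := aux_dom_map (aux_pow_nonneg hA.1 (s * (n - 1))) h1
    have h5 := aux_int_dom hadd hsm h3 hc h4
    rw [Matrix.mulVec_mulVec, ← pow_add] at h5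
    have hle : s * (n - 1) + t ≤ (n - 1) * (m - 1) + 1 := by
      obtain ⟨n', rfl⟩ : ∃ n', n = n' + 2 := ⟨n - 2, by omega⟩
      obtain ⟨m', rfl⟩ : ∃ m', m = m' + 1 := ⟨m - 1, by omega⟩
      have e1 : n' + 2 - 1 = n' + 1 := by omega
      rw [e1, Nat.add_sub_cancel]
      have e2 : s ≤ m' := by omega
      have e3 : s + t ≤ m' + 1 := by omega
      nlinarith [Nat.mul_le_mul_left n' e2]
    rw [← Nat.sub_add_cancel hle, pow_add, ← Matrix.mulVec_mulVec]
    exact aux_int_pow hadd hsm hpt hn0 hA h5 _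
  apply Nat.sInf_le
  refine ⟨by omega, ?_⟩
  intro x hx hx0
  obtain ⟨y, hy, c, hc, h⟩ := hdomK x hx hx0
  exact aux_int_dom hadd hsm (hgen ⟨y, hy⟩) hc (aux_dom_map (aux_pow_nonneg hA.1 _) h)
end
end

section
/- Let n ≥ 3 be an integer. If n is odd, then every K ∈ P(n+1,n) and every K-primitive matrix A satisfy γ(A) ≤ n² − n + 1, and there exist K ∈ P(n+1,n) and a K-primitive matrix A with γ(A) = n² − n + 1. If n is even, then every K ∈ P(n+1,n) and every K-primitive matrix A satisfy γ(A) ≤ n² − n, and there exist K ∈ P(n+1,n) and a K-primitive matrix A with γ(A) = n² − n. In other words, the maximum of γ(K) over all n-dimensional minimal cones equals n² − n + 1 if n is odd and n² − n if n is even. -/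
open Matrix Set Real

noncomputable section

namespace MinCone

/-- `u` dominates a positive multiple of `v` in the cone order. -/
def Dom {n : ℕ} (K : Set (Fin n → ℝ)) (u v : Fin n → ℝ) : Prop :=
  ∃ c : ℝ, 0 < c ∧ u - c • v ∈ K

section basics
variable {n : ℕ} {K : Set (Fin n → ℝ)} {A : Matrix (Fin n) (Fin n) ℝ}

lemma cone_zero (hK : IsProperCone K) : (0 : Fin n → ℝ) ∈ K := by
  have h : (0 : Fin n → ℝ) ∈ K ∩ (-K) := by rw [hK.2.2.2.1]; rfl
  exact h.1

lemma cone_sum (hK : IsProperCone K) {ι : Type*} (s : Finset ι) (f : ι → Fin n → ℝ)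
    (h : ∀ i ∈ s, f i ∈ K) : ∑ i ∈ s, f i ∈ K := by
  classical
  induction s using Finset.induction_on with
  | empty => simpa using cone_zero hK
  | insert a s ha ih =>
    rw [Finset.sum_insert ha]
    exact hK.2.1 _ (h a (by simp)) _ (ih fun i hi => h i (by simp [hi]))

lemma cone_pointed (hK : IsProperCone K) {u v : Fin n → ℝ} (hu : u ∈ K) (hv : v ∈ K)
    (h : u + v = 0) : u = 0 := by
  have h' : u ∈ K ∩ (-K) := ⟨hu, by
    rw [Set.mem_neg]; rwa [show -u = v from (eq_neg_of_add_eq_zero_right h).symm]⟩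
  rw [hK.2.2.2.1] at h'
  exact h'

lemma cone_sum_zero (hK : IsProperCone K) {ι : Type*} (s : Finset ι) (f : ι → Fin n → ℝ)
    (h : ∀ i ∈ s, f i ∈ K) (h0 : ∑ i ∈ s, f i = 0) : ∀ i ∈ s, f i = 0 := by
  classical
  intro i hi
  rw [← Finset.add_sum_erase s f hi] at h0
  exact cone_pointed hK (h i hi)
    (cone_sum hK _ _ fun j hj => h j (Finset.mem_of_mem_erase hj)) h0

lemma Dom.trans (hK : IsProperCone K) {u v w : Fin n → ℝ} (h1 : Dom K u v) (h2 : Dom K v w) :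
    Dom K u w := by
  obtain ⟨c, hc, h1⟩ := h1
  obtain ⟨d, hd, h2⟩ := h2
  refine ⟨c * d, by positivity, ?_⟩
  have := hK.2.1 _ h1 _ (hK.2.2.1 c hc.le _ h2)
  convert this using 1
  rw [smul_sub, smul_smul]; abel

lemma Dom.refl (hK : IsProperCone K) (u : Fin n → ℝ) : Dom K u u :=
  ⟨1, one_pos, by simpa using cone_zero hK⟩

lemma Dom.map (hA : KNonneg K A) {u v : Fin n → ℝ} (h : Dom K u v) :
    Dom K (A.mulVec u) (A.mulVec v) := by
  obtain ⟨c, hc, h⟩ := h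
  refine ⟨c, hc, ?_⟩
  have := hA _ h
  rwa [Matrix.mulVec_sub, Matrix.mulVec_smul] at this

lemma knn_pow (hA : KNonneg K A) (k : ℕ) : KNonneg K (A ^ k) := by
  induction k with
  | zero => intro x hx; simpa using hx
  | succ k ih =>
    intro x hx
    rw [pow_succ, ← Matrix.mulVec_mulVec]
    exact ih _ (hA _ hx)

lemma int_add (hK : IsProperCone K) {u v : Fin n → ℝ} (hu : u ∈ interior K) (hv : v ∈ K) :
    u + v ∈ interior K := by
  rw [mem_interior] at hu ⊢
  obtain ⟨t, ht, hto, hut⟩ := hu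
  refine ⟨(fun x => x + v) '' t, ?_, (isOpenMap_add_right v) t hto, ⟨u, hut, rfl⟩⟩
  rintro _ ⟨x, hx, rfl⟩
  exact hK.2.1 _ (ht hx) _ hv

lemma int_smul (hK : IsProperCone K) {u : Fin n → ℝ} (hu : u ∈ interior K) {c : ℝ} (hc : 0 < c) :
    c • u ∈ interior K := by
  rw [mem_interior] at hu ⊢
  obtain ⟨t, ht, hto, hut⟩ := hu
  refine ⟨(fun x => c • x) '' t, ?_, (isOpenMap_smul₀ hc.ne') t hto, ⟨u, hut, rfl⟩⟩
  rintro _ ⟨x, hx, rfl⟩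
  exact hK.2.2.1 c hc.le _ (ht hx)

lemma int_of_dom (hK : IsProperCone K) {u v : Fin n → ℝ} (h : Dom K u v)
    (hv : v ∈ interior K) : u ∈ interior K := by
  obtain ⟨c, hc, h⟩ := h
  have := int_add hK (int_smul hK hv hc) h
  simpa using this

lemma dom_of_int {u : Fin n → ℝ} (hu : u ∈ interior K) (w : Fin n → ℝ) : Dom K u w := by
  have hcont : Filter.Tendsto (fun c : ℝ => u - c • w) (nhdsWithin 0 (Set.Ioi 0)) (nhds u) := by
    have : Continuous (fun c : ℝ => u - c • w) := by fun_prop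
    have h := this.tendsto 0
    simp only [zero_smul, sub_zero] at h
    exact h.mono_left nhdsWithin_le_nhds
  have h1 : ∀ᶠ c in nhdsWithin (0 : ℝ) (Set.Ioi 0), u - c • w ∈ K :=
    hcont (mem_interior_iff_mem_nhds.1 hu)
  obtain ⟨c, hc, hc0⟩ := (h1.and self_mem_nhdsWithin).exists
  exact ⟨c, hc0, hc⟩

lemma exists_ne (hK : IsProperCone K) (hn : 2 ≤ n) : ∃ z ∈ K, z ≠ 0 := by
  obtain ⟨u, hu⟩ := hK.2.2.2.2
  by_cases h : u = 0
  · subst h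
    obtain ⟨c, hc, h⟩ := dom_of_int hu (Pi.single ⟨0, by omega⟩ (-1) : Fin n → ℝ)
    refine ⟨_, h, fun h0 => ?_⟩
    have := congrFun h0 ⟨0, by omega⟩
    simp at this
    exact hc.ne' this
  · exact ⟨u, interior_subset hu, h⟩

lemma int_map (hK : IsProperCone K) (hn : 2 ≤ n) (hA : KPrimitive K A) {u : Fin n → ℝ}
    (hu : u ∈ interior K) : A.mulVec u ∈ interior K := by
  obtain ⟨hA, k, hk, hp⟩ := hA
  obtain ⟨z, hz, hz0⟩ := exists_ne hK hn
  obtain ⟨k, rfl⟩ : ∃ j, k = j + 1 := ⟨k - 1, by omega⟩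
  have h := (dom_of_int hu ((A ^ k).mulVec z)).map hA
  refine int_of_dom hK h ?_
  have := hp z hz hz0
  rwa [pow_succ', ← Matrix.mulVec_mulVec] at this

lemma int_pow (hK : IsProperCone K) (hn : 2 ≤ n) (hA : KPrimitive K A) {u : Fin n → ℝ} (k : ℕ)
    (hu : u ∈ interior K) : (A ^ k).mulVec u ∈ interior K := by
  induction k with
  | zero => simpa using hu
  | succ k ih =>
    rw [pow_succ', ← Matrix.mulVec_mulVec]
    exact int_map hK hn hA ih

lemma int_mono (hK : IsProperCone K) (hn : 2 ≤ n) (hA : KPrimitive K A) {u : Fin n → ℝ} {k l : ℕ}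
    (hkl : k ≤ l) (hu : (A ^ k).mulVec u ∈ interior K) : (A ^ l).mulVec u ∈ interior K := by
  obtain ⟨d, rfl⟩ := Nat.exists_eq_add_of_le' hkl
  rw [pow_add, ← Matrix.mulVec_mulVec]
  exact int_pow hK hn hA d hu

lemma int_large (hK : IsProperCone K) (hn : 2 ≤ n) (hA : KPrimitive K A) :
    ∃ k0, ∀ k, k0 ≤ k → ∀ u ∈ K, u ≠ 0 → (A ^ k).mulVec u ∈ interior K := by
  obtain ⟨k0, hk0, hp⟩ := hA.2
  exact ⟨k0, fun k hk u hu hu0 => int_mono hK hn hA hk (hp u hu hu0)⟩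

lemma extreme_not_int (hn : 2 ≤ n) {x : Fin n → ℝ} (hx : IsExtremeVec K x) (hK : IsProperCone K) :
    x ∉ interior K := by
  intro hi
  have key : ∀ z : Fin n → ℝ, ∃ a : ℝ, z = a • x := by
    intro z
    obtain ⟨c, hc, h1⟩ := dom_of_int hi z
    obtain ⟨d, hd, h2⟩ := dom_of_int hi (-z)
    -- average
    have h1' := hK.2.2.1 (d / (c + d)) (by positivity) _ h1
    have h2' := hK.2.2.1 (c / (c + d)) (by positivity) _ h2
    obtain ⟨⟨a, ha, h⟩, -⟩ := hx.2.2 _ h1' _ h2' (by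
      ext i
      simp
      field_simp
      ring)
    have hcd : c + d ≠ 0 := by positivity
    refine ⟨(d / (c+d) - a) * ((c + d) / (c * d)), ?_⟩
    ext i
    have := congrFun h i
    simp at this ⊢
    have h3 : a * x i = d / (c + d) * (x i - c * z i) := this.symm
    rw [mul_right_comm, sub_mul, h3]
    field_simp
    ring
  obtain ⟨a, ha⟩ := key (Pi.single ⟨0, by omega⟩ 1)
  obtain ⟨b, hb⟩ := key (Pi.single ⟨1, by omega⟩ 1)
  have h1 := congrFun ha ⟨0, by omega⟩
  have h2 := congrFun ha ⟨1, by omega⟩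
  have h3 := congrFun hb ⟨1, by omega⟩
  simp at h1 h2 h3
  rcases h2 with h2 | h2
  · simp [h2] at h1
  · simp [h2] at h3

/-- Key estimate: a vector dominated by its image under `A ^ l`. -/
lemma circuit_int (hK : IsProperCone K) (hn : 2 ≤ n) (hA : KPrimitive K A) {y : Fin n → ℝ}
    (hy : y ∈ K) (hy0 : y ≠ 0) {l : ℕ} (hl : 0 < l) (h : Dom K ((A ^ l).mulVec y) y) :
    (A ^ (l * (n - 1))).mulVec y ∈ interior K := by
  set T := A ^ l with hT
  have hTn : KNonneg K T := knn_pow hA.1 l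
  have step : ∀ j d : ℕ, Dom K ((T ^ (j + d)).mulVec y) ((T ^ j).mulVec y) := by
    intro j d
    induction d with
    | zero => exact Dom.refl hK _
    | succ d ih =>
      refine Dom.trans hK ?_ ih
      rw [← add_assoc, pow_succ, ← Matrix.mulVec_mulVec]
      exact h.map (knn_pow hTn _)
  have step' : ∀ j, j ∈ Finset.range n →
      Dom K ((T ^ (n - 1)).mulVec y) ((T ^ j).mulVec y) := by
    intro j hj
    have hj := Finset.mem_range.1 hj
    have := step j (n - 1 - j)
    rwa [show j + (n - 1 - j) = n - 1 by omega] at this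
  obtain ⟨k0, hk0⟩ := int_large hK hn hA
  have hintr : (T ^ k0).mulVec y ∈ interior K := by
    rw [hT, ← pow_mul]
    exact hk0 _ (Nat.le_mul_of_pos_left _ hl) y hy hy0
  rw [pow_mul, ← hT]
  set u := (T ^ (n - 1)).mulVec y with hu
  have huK : u ∈ K := knn_pow hTn _ y hy
  -- Cayley-Hamilton
  have hch : ∃ p : ℕ → ℝ, T ^ k0 = ∑ j ∈ Finset.range n, p j • T ^ j := by
    refine ⟨fun j => (Polynomial.X ^ k0 %ₘ T.charpoly).coeff j, ?_⟩
    rw [Matrix.pow_eq_aeval_mod_charpoly]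
    refine Polynomial.aeval_eq_sum_range' ?_ T
    have hd := Polynomial.natDegree_modByMonic_lt (Polynomial.X ^ k0) T.charpoly_monic (by
      intro h1
      have := T.charpoly_natDegree_eq_dim
      rw [h1] at this
      simp at this
      omega)
    rwa [T.charpoly_natDegree_eq_dim, Fintype.card_fin] at hd
  obtain ⟨p, hp⟩ := hch
  -- each term is bounded
  have hterm : ∀ j ∈ Finset.range n, ∃ c : ℝ, 0 ≤ c ∧ c • u - p j • (T ^ j).mulVec y ∈ K := by
    intro j hj
    obtain ⟨c, hc, h1⟩ := step' j hj
    refine ⟨|p j| / c, by positivity, ?_⟩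
    have h2 := hK.2.1 _ (hK.2.2.1 (|p j| / c) (by positivity) _ h1) _
      (hK.2.2.1 (|p j| - p j) (by linarith [le_abs_self (p j)]) _ (knn_pow hTn j y hy))
    convert h2 using 1
    rw [smul_sub, smul_smul, div_mul_cancel₀ _ hc.ne', sub_smul]
    abel
  choose! c hc hcK using hterm
  have hsum := cone_sum hK (Finset.range n) _ hcK
  rw [Finset.sum_sub_distrib, ← Finset.sum_smul] at hsum
  have e : ∑ j ∈ Finset.range n, p j • (T ^ j).mulVec y = (T ^ k0).mulVec y := by
    rw [hp, Matrix.sum_mulVec]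
    simp [Matrix.smul_mulVec]
  rw [e] at hsum
  set C := ∑ j ∈ Finset.range n, c j
  have hC : 0 ≤ C := Finset.sum_nonneg hc
  refine int_of_dom hK ⟨1 / (C + 1), by positivity, ?_⟩ hintr
  have := hK.2.2.1 (1 / (C + 1)) (by positivity) _ (hK.2.1 _ hsum _ huK)
  convert this using 1
  ext i
  simp
  field_simp
  ring

end basics

section generators
variable {n : ℕ} {K : Set (Fin n → ℝ)} {A : Matrix (Fin n) (Fin n) ℝ}

lemma gen_mem {m : ℕ} (x : Fin m → Fin n → ℝ) (j : Fin m) : x j ∈ ConeGen x := by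
  classical
  refine ⟨Pi.single j 1, fun i => ?_, ?_⟩
  · by_cases h : i = j
    · subst h; simp
    · simp [h]
  · simp [Pi.single_apply, ite_smul]

lemma gen_remove {m : ℕ} (y : Fin (m + 1) → Fin n → ℝ) (j : Fin (m + 1))
    (h : y j ∈ ConeGen (fun i => y (j.succAbove i))) :
    ConeGen y = ConeGen (fun i => y (j.succAbove i)) := by
  obtain ⟨d, hd, hj⟩ := h
  ext x
  constructor
  · rintro ⟨c, hc, rfl⟩
    refine ⟨fun i => c j * d i + c (j.succAbove i), fun i => ?_, ?_⟩
    · have := hc j; have := hd i; have := hc (j.succAbove i); positivity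
    · rw [Fin.sum_univ_succAbove _ j]
      conv_lhs => rw [hj]
      rw [Finset.smul_sum, ← Finset.sum_add_distrib]
      refine Finset.sum_congr rfl fun i _ => ?_
      rw [add_smul, mul_smul]
  · rintro ⟨c, hc, rfl⟩
    refine ⟨j.insertNth 0 c, fun i => ?_, ?_⟩
    · refine Fin.succAboveCases j ?_ (fun i => ?_) i
      · simp
      · simpa using hc i
    · rw [Fin.sum_univ_succAbove _ j]
      simp

/-- A polyhedral cone with `n + 1` extreme rays is generated by at most `n + 1` extreme vectors. -/
lemma exists_gen {r : ℕ} (hr : 0 < r) (h : MemP r K) :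
    ∃ (m : ℕ) (x : Fin m → Fin n → ℝ), m ≤ r ∧ K = ConeGen x ∧
      ∀ j, IsExtremeVec K (x j) := by
  classical
  obtain ⟨⟨hK, hg⟩, hcard⟩ := h
  have hmin := fun k => Nat.find_min hg (m := k)
  obtain ⟨y, hy⟩ := Nat.find_spec hg
  generalize Nat.find hg = m at hmin y hy
  -- no generator is redundant
  have hred : ∀ (m' : ℕ) (y' : Fin (m' + 1) → Fin n → ℝ) (j : Fin (m' + 1)), m' + 1 = m →
      K = ConeGen y' → y' j ∉ ConeGen (fun i => y' (j.succAbove i)) := by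
    intro m' y' j hm hy' hj
    exact hmin m' (by omega) ⟨_, hy'.trans (gen_remove y' j hj)⟩
  have hext : ∀ j, IsExtremeVec K (y j) := by
    intro j
    obtain ⟨m, rfl⟩ : ∃ m', m = m' + 1 := ⟨m - 1, by have := j.2; omega⟩
    have hj := hred m y j rfl hy
    have hyK : ∀ i, y i ∈ K := fun i => hy ▸ gen_mem y i
    refine ⟨hyK j, ?_, ?_⟩
    · intro h0
      exact hj ⟨0, by simp, by simp [h0]⟩
    · intro u hu v hv huv
      rw [hy] at hu hv
      obtain ⟨a, ha, hu⟩ := hu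
      obtain ⟨b, hb, hv⟩ := hv
      have hrel : (1 - a j - b j) • y j =
          ∑ i, (a (j.succAbove i) + b (j.succAbove i)) • y (j.succAbove i) := by
        have e := huv
        rw [hu, hv, Fin.sum_univ_succAbove _ j, Fin.sum_univ_succAbove _ j] at e
        simp only [add_smul, Finset.sum_add_distrib, sub_smul, one_smul]
        nth_rw 1 [e]
        abel
      rcases lt_or_ge 0 (1 - a j - b j) with hpos | hneg
      · exfalso
        apply hj
        refine ⟨fun i => (1 - a j - b j)⁻¹ * (a (j.succAbove i) + b (j.succAbove i)),
          fun i => ?_, ?_⟩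
        · have := ha (j.succAbove i); have := hb (j.succAbove i); positivity
        · simp only [mul_smul]
          rw [← Finset.smul_sum, ← hrel, smul_smul, inv_mul_cancel₀ hpos.ne', one_smul]
      · have h0 : ∑ i, (a (j.succAbove i) + b (j.succAbove i)) • y (j.succAbove i) = 0 := by
          refine cone_pointed hK (v := (a j + b j - 1) • y j) ?_ ?_ ?_
          · exact cone_sum hK _ _ fun i _ => hK.2.2.1 _ (add_nonneg (ha _) (hb _)) _ (hyK _)
          · exact hK.2.2.1 _ (by linarith) _ (hyK _)
          · rw [← hrel, ← add_smul, show 1 - a j - b j + (a j + b j - 1) = 0 by ring, zero_smul]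
        have h1 := cone_sum_zero hK _ _
          (fun i _ => hK.2.2.1 _ (add_nonneg (ha _) (hb _)) _ (hyK _)) h0
        have h2 : ∀ i, a (j.succAbove i) • y (j.succAbove i) = 0 := fun i => by
          have := h1 i (Finset.mem_univ _)
          rw [add_smul] at this
          exact cone_pointed hK (hK.2.2.1 _ (ha _) _ (hyK _)) (hK.2.2.1 _ (hb _) _ (hyK _)) this
        have h3 : ∀ i, b (j.succAbove i) • y (j.succAbove i) = 0 := fun i => by
          have := h1 i (Finset.mem_univ _)
          rwa [add_smul, h2, zero_add] at this
        refine ⟨⟨a j, ha j, ?_⟩, ⟨b j, hb j, ?_⟩⟩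
        · rw [hu, Fin.sum_univ_succAbove _ j]; simp [h2]
        · rw [hv, Fin.sum_univ_succAbove _ j]; simp [h3]
  refine ⟨m, y, ?_, hy, hext⟩
  have hfin : (ExtremeRays K).Finite := by
    by_contra hinf
    have := Set.Infinite.ncard hinf
    omega
  let R : Fin m → Set (Fin n → ℝ) := fun j => {z | ∃ c : ℝ, 0 ≤ c ∧ z = c • y j}
  have hinj : Function.Injective R := by
    intro i j hij
    by_contra hne
    obtain ⟨m, rfl⟩ : ∃ m', m = m' + 1 := ⟨m - 1, by have := j.2; omega⟩
    have hi : y i ∈ R j := hij ▸ ⟨1, zero_le_one, by simp⟩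
    obtain ⟨c, hc, hi⟩ := hi
    apply hred m y i rfl hy
    obtain ⟨k, hk⟩ := Fin.exists_succAbove_eq (Ne.symm hne)
    refine ⟨Pi.single k c, fun l => ?_, ?_⟩
    · by_cases h : l = k
      · subst h; simpa using hc
      · simp [h]
    · simp [Pi.single_apply, ite_smul, hk, ← hi]
  have := Set.ncard_le_ncard (s := Set.range R) (t := ExtremeRays K) (by
    rintro _ ⟨j, rfl⟩
    exact ⟨y j, hext j, rfl⟩) hfin
  rw [Set.ncard_eq_toFinset_card', Set.toFinset_range, Finset.card_image_of_injective _ hinj] at this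
  simpa [hcard] using this

end generators

section upper
variable {n m : ℕ} {K : Set (Fin n → ℝ)} {A : Matrix (Fin n) (Fin n) ℝ}
  {x : Fin m → Fin n → ℝ} {B : Fin m → Fin m → ℝ}

lemma W_trans (hK : IsProperCone K) (hA : KNonneg K A) {s t : ℕ} {u v w : Fin n → ℝ}
    (h1 : Dom K ((A ^ s).mulVec u) v) (h2 : Dom K ((A ^ t).mulVec v) w) :
    Dom K ((A ^ (s + t)).mulVec u) w := by
  have h := h1.map (knn_pow hA t)
  rw [Matrix.mulVec_mulVec, ← pow_add, add_comm] at h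
  exact h.trans hK h2

lemma W_loop (hK : IsProperCone K) (hA : KNonneg K A) {s : ℕ} {u : Fin n → ℝ}
    (h1 : Dom K ((A ^ s).mulVec u) u) (q : ℕ) : Dom K ((A ^ (q * s)).mulVec u) u := by
  induction q with
  | zero => simpa using Dom.refl hK u
  | succ q ih => rw [add_mul, one_mul]; exact W_trans hK hA ih h1

lemma exists_B (hA : KNonneg K A) (hg : K = ConeGen x) :
    ∃ B : Fin m → Fin m → ℝ, (∀ i j, 0 ≤ B i j) ∧
      ∀ i, A.mulVec (x i) = ∑ j, B i j • x j := by
  have : ∀ i, ∃ c : Fin m → ℝ, (∀ j, 0 ≤ c j) ∧ A.mulVec (x i) = ∑ j, c j • x j := by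
    intro i
    have h := hA (x i) (hg ▸ gen_mem x i)
    rw [hg] at h
    exact h
  choose B hB using this
  exact ⟨B, fun i => (hB i).1, fun i => (hB i).2⟩

lemma W_edge (hK : IsProperCone K) (hg : K = ConeGen x) (hB : ∀ i j, 0 ≤ B i j)
    (hAB : ∀ i, A.mulVec (x i) = ∑ j, B i j • x j) {i j : Fin m} (h : 0 < B i j) :
    Dom K ((A ^ 1).mulVec (x i)) (x j) := by
  classical
  refine ⟨B i j, h, ?_⟩
  rw [pow_one, hAB, ← Finset.add_sum_erase _ _ (Finset.mem_univ j), add_sub_cancel_left]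
  exact cone_sum hK _ _ fun k _ => hK.2.2.1 _ (hB _ _) _ (hg ▸ gen_mem x k)

lemma W_iter (hK : IsProperCone K) (hA : KNonneg K A) (hg : K = ConeGen x) (hB : ∀ i j, 0 ≤ B i j)
    (hAB : ∀ i, A.mulVec (x i) = ∑ j, B i j • x j) {f : Fin m → Fin m}
    (hf : ∀ i, 0 < B i (f i)) (t : ℕ) (i : Fin m) :
    Dom K ((A ^ t).mulVec (x i)) (x (f^[t] i)) := by
  induction t with
  | zero => simpa using Dom.refl hK _
  | succ t ih =>
    rw [Function.iterate_succ_apply']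
    exact W_trans hK hA ih (W_edge hK hg hB hAB (hf _))

lemma closed_int (hK : IsProperCone K) (hn : 2 ≤ n) (hA : KPrimitive K A)
    {u v : Fin n → ℝ} (hv : IsExtremeVec K v) {t l N : ℕ} (hl : 0 < l)
    (h1 : Dom K ((A ^ t).mulVec u) v) (h2 : Dom K ((A ^ l).mulVec v) v)
    (hN : t + l * (n - 1) ≤ N) : (A ^ N).mulVec u ∈ interior K := by
  refine int_mono hK hn hA hN ?_
  have := circuit_int hK hn hA hv.1 hv.2.1 hl h2
  have h := h1.map (knn_pow hA.1 (l * (n - 1)))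
  rw [Matrix.mulVec_mulVec, ← pow_add, add_comm] at h
  exact int_of_dom hK h this

lemma no_perm (hK : IsProperCone K) (hn : 2 ≤ n) (hA : KPrimitive K A)
    (hext : ∀ j, IsExtremeVec K (x j)) (S : Fin m → Prop)
    (hS : ∀ i, S i → ∃ j, S j ∧ ∃ c : ℝ, 0 ≤ c ∧ A.mulVec (x i) = c • x j) (i : Fin m) : ¬ S i := by
  intro hi
  have key : ∀ k : ℕ, ∃ j, S j ∧ ∃ c : ℝ, 0 ≤ c ∧ (A ^ k).mulVec (x i) = c • x j := by
    intro k
    induction k with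
    | zero => exact ⟨i, hi, 1, zero_le_one, by simp⟩
    | succ k ih =>
      obtain ⟨j, hj, c, hc, h⟩ := ih
      obtain ⟨j', hj', c', hc', h'⟩ := hS j hj
      refine ⟨j', hj', c * c', by positivity, ?_⟩
      rw [pow_succ', ← Matrix.mulVec_mulVec, h, Matrix.mulVec_smul, h', smul_smul]
  obtain ⟨k0, hk0⟩ := int_large hK hn hA
  have h := hk0 k0 le_rfl (x i) (hext i).1 (hext i).2.1
  obtain ⟨j, -, c, hc, hj⟩ := key k0
  rw [hj] at h
  have h := int_add hK h (hext j).1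
  refine extreme_not_int hn (hext j) hK (int_of_dom hK ⟨(c + 1)⁻¹, by positivity, ?_⟩ h)
  have : x j - (c + 1)⁻¹ • (c • x j + x j) = 0 := by
    ext i
    simp
    field_simp
    ring
  rw [this]
  exact cone_zero hK

lemma exists_nonsurj (hK : IsProperCone K) (hn : 2 ≤ n) (hA : KPrimitive K A)
    (hext : ∀ j, IsExtremeVec K (x j)) (hB : ∀ i j, 0 ≤ B i j)
    (hAB : ∀ i, A.mulVec (x i) = ∑ j, B i j • x j) (i0 : Fin m) :
    ∃ f : Fin m → Fin m, (∀ i, 0 < B i (f i)) ∧ ¬ Function.Surjective f := by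
  classical
  have hout : ∀ i, ∃ j, 0 < B i j := by
    intro i
    by_contra hc
    push Not at hc
    refine no_perm hK hn hA hext (fun j => j = i) ?_ i rfl
    rintro _ rfl
    refine ⟨_, rfl, 0, le_rfl, ?_⟩
    rw [hAB, zero_smul]
    exact Finset.sum_eq_zero fun j _ => by rw [le_antisymm (hc j) (hB _ j), zero_smul]
  choose f hf using hout
  by_cases hs : Function.Surjective f
  · by_cases hu : ∀ i j, 0 < B i j → j = f i
    · exfalso
      refine no_perm hK hn hA hext (fun _ => True) ?_ i0 trivial
      intro i _
      refine ⟨f i, trivial, B i (f i), hB _ _, ?_⟩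
      rw [hAB]
      refine Finset.sum_eq_single _ (fun j _ hj => ?_) (by simp)
      have : ¬ 0 < B i j := fun h => hj (hu i j h)
      rw [le_antisymm (not_lt.1 this) (hB _ _), zero_smul]
    · push Not at hu
      obtain ⟨i, j, hij, hne⟩ := hu
      refine ⟨Function.update f i j, fun k => ?_, fun hs' => ?_⟩
      · by_cases hk : k = i
        · subst hk; simpa using hij
        · simpa [hk] using hf k
      · have hinj := Finite.injective_iff_surjective.2 hs'
        obtain ⟨k, hk⟩ := hs j
        have hki : k ≠ i := by rintro rfl; exact hne hk.symm
        exact hki (hinj (by simp [hki, hk]))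
  · exact ⟨f, hf, hs⟩

lemma pigeon {f : Fin m → Fin m} (hf : ¬ Function.Surjective f) (i : Fin m) :
    ∃ t l, 1 ≤ t ∧ 1 ≤ l ∧ t + l ≤ m ∧ f^[t + l] i = f^[t] i := by
  classical
  simp only [Function.Surjective, not_forall, not_exists] at hf
  obtain ⟨b, hb⟩ := hf
  have hcard : (Finset.univ.erase b).card < (Finset.Icc 1 m).card := by
    simp
    have := i.2
    omega
  obtain ⟨s, hs, t, ht, hne, he⟩ := Finset.exists_ne_map_eq_of_card_lt_of_maps_to hcard
    (f := fun t => f^[t] i) (by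
      intro t ht
      simp at ht
      obtain ⟨t, rfl⟩ : ∃ t', t = t' + 1 := ⟨t - 1, by omega⟩
      simp only [Finset.coe_erase, Finset.coe_univ, Set.mem_sdiff, Set.mem_univ, true_and,
        Set.mem_singleton_iff]
      rw [Function.iterate_succ_apply']
      exact hb _)
  simp only [Finset.mem_Icc] at hs ht
  rcases lt_or_gt_of_ne hne with h | h
  · exact ⟨s, t - s, hs.1, by omega, by omega, by rw [show s + (t - s) = t by omega]; exact he.symm⟩
  · exact ⟨t, s - t, ht.1, by omega, by omega, by rw [show t + (s - t) = s by omega]; exact he⟩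

lemma gen_positive (hK : IsProperCone K) (hA : KNonneg K A) (hg : K = ConeGen x) {N : ℕ}
    (h : ∀ i, (A ^ N).mulVec (x i) ∈ interior K) : KPositive K (A ^ N) := by
  classical
  intro z hz hz0
  rw [hg] at hz
  obtain ⟨c, hc, rfl⟩ := hz
  obtain ⟨j, hj⟩ : ∃ j, c j ≠ 0 := by
    by_contra hcon
    push Not at hcon
    exact hz0 (by simp [hcon])
  have hj' : 0 < c j := lt_of_le_of_ne (hc j) (Ne.symm hj)
  rw [← Finset.add_sum_erase _ _ (Finset.mem_univ j), Matrix.mulVec_add, Matrix.mulVec_smul]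
  refine int_add hK (int_smul hK (h j) hj') (knn_pow hA N _ ?_)
  exact cone_sum hK _ _ fun k _ => hK.2.2.1 _ (hc _) _ (hg ▸ gen_mem x k)

lemma upper_gen (hK : IsProperCone K) (hn : 2 ≤ n) (hA : KPrimitive K A) (hg : K = ConeGen x)
    (hext : ∀ j, IsExtremeVec K (x j)) {N : ℕ} (hN : m + (n - 2) * (m - 1) ≤ N) :
    KPositive K (A ^ N) := by
  obtain ⟨B, hB, hAB⟩ := exists_B hA.1 hg
  refine gen_positive hK hA.1 hg fun i => ?_
  obtain ⟨f, hf, hs⟩ := exists_nonsurj hK hn hA hext hB hAB i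
  obtain ⟨t, l, ht, hl, htl, he⟩ := pigeon hs i
  have h1 := W_iter hK hA.1 hg hB hAB hf t i
  have h2 := W_iter hK hA.1 hg hB hAB hf l (f^[t] i)
  rw [← Function.iterate_add_apply, add_comm l t, he] at h2
  refine closed_int hK hn hA (hext _) hl h1 h2 (le_trans ?_ hN)
  obtain ⟨n, rfl⟩ : ∃ n', n = n' + 2 := ⟨n - 2, by omega⟩
  have : n * l ≤ n * (m - 1) := Nat.mul_le_mul_left _ (by omega)
  simp only [Nat.add_sub_cancel]
  rw [show n + 2 - 1 = n + 1 by omega]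
  nlinarith

lemma upper_odd (hn : 3 ≤ n) (hK : MemP (n + 1) K) (hA : KPrimitive K A) :
    KPositive K (A ^ (n ^ 2 - n + 1)) := by
  obtain ⟨m, x, hm, hg, hext⟩ := exists_gen (by omega) hK
  refine upper_gen hK.1.1 (by omega) hA hg hext ?_
  have : (n - 2) * (m - 1) ≤ (n - 2) * n := Nat.mul_le_mul_left _ (by omega)
  obtain ⟨n, rfl⟩ : ∃ n', n = n' + 2 := ⟨n - 2, by omega⟩
  simp only [Nat.add_sub_cancel] at *
  zify [show n + 2 ≤ (n + 2) ^ 2 by nlinarith]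
  push_cast at *
  zify at this
  nlinarith

end upper

section even
variable {n : ℕ} {K : Set (Fin n → ℝ)} {A : Matrix (Fin n) (Fin n) ℝ}

lemma sign_core {n : ℕ} (hn : 3 ≤ n) (he : Even n) {a c : ℕ → ℝ} {p q r lam : ℝ} (hp : 0 < p)
    (hq : 0 < q) (hr : 0 < r) (hc : ∀ j, 0 < c j) (h0 : a n * p = lam * a 0)
    (h1 : a 0 * q + a n * r = lam * a 1)
    (hj : ∀ j, 1 ≤ j → j < n → a j * c j = lam * a (j + 1)) (han : 0 < a n)
    (hnn : ¬ ∀ k, k ≤ n → 0 < a k) : a 0 < 0 ∧ a 1 < 0 := by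
  rcases lt_trichotomy lam 0 with hl | hl | hl
  · have ha0 : a 0 < 0 := by
      by_contra h
      have : lam * a 0 ≤ 0 := mul_nonpos_of_nonpos_of_nonneg hl.le (not_lt.1 h)
      have : 0 < a n * p := by positivity
      linarith
    have key : ∀ k, k + 1 ≤ n → 0 < a (n - k) * (-1) ^ k := by
      intro k
      induction k with
      | zero => intro _; simpa using han
      | succ k ih =>
        intro hk
        have ih := ih (by omega)
        have h := hj (n - (k + 1)) (by omega) (by omega)
        rw [show n - (k + 1) + 1 = n - k by omega] at h
        have h2 : a (n - (k + 1)) * (-1) ^ (k + 1) * c (n - (k + 1))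
            = (-lam) * (a (n - k) * (-1) ^ k) := by
          rw [pow_succ]; linear_combination (-(-1) ^ k) * h
        have h3 : 0 < (-lam) * (a (n - k) * (-1) ^ k) := mul_pos (by linarith) ih
        rw [← h2] at h3
        exact pos_of_mul_pos_left h3 (hc _).le
    have h := key (n - 1) (by omega)
    rw [show n - (n - 1) = 1 by omega, Odd.neg_one_pow (Nat.Even.sub_odd (by omega) he odd_one)] at h
    exact ⟨ha0, by linarith⟩
  · subst hl
    have : 0 < a n * p := by positivity
    linarith
  · exfalso
    apply hnn
    have ha0 : 0 < a 0 := by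
      have : 0 < lam * a 0 := by rw [← h0]; positivity
      exact pos_of_mul_pos_right this hl.le
    have ha1 : 0 < a 1 := by
      have : 0 < lam * a 1 := by rw [← h1]; positivity
      exact pos_of_mul_pos_right this hl.le
    have : ∀ k, k + 1 ≤ n → 0 < a (k + 1) := by
      intro k
      induction k with
      | zero => intro _; exact ha1
      | succ k ih =>
        intro hk
        have ih := ih (by omega)
        have h := hj (k + 1) (by omega) (by omega)
        have h2 : 0 < lam * a (k + 1 + 1) := by rw [← h]; have := hc (k + 1); positivity
        exact pos_of_mul_pos_right h2 hl.le
    intro k hk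
    rcases Nat.eq_zero_or_pos k with rfl | h
    · exact ha0
    · obtain ⟨k, rfl⟩ : ∃ k', k = k' + 1 := ⟨k - 1, by omega⟩
      exact this k hk

lemma zero_core {n : ℕ} {a c : ℕ → ℝ} {p q r lam : ℝ}
    (hq : 0 < q) (hc : ∀ j, 0 < c j) (h0 : a n * p = lam * a 0)
    (h1 : a 0 * q + a n * r = lam * a 1)
    (hj : ∀ j, 1 ≤ j → j < n → a j * c j = lam * a (j + 1)) (han : a n = 0) :
    ∀ k, k ≤ n → a k = 0 := by
  by_cases hl : lam = 0
  · subst hl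
    intro k hk
    rcases Nat.eq_zero_or_pos k with rfl | h
    · rw [han] at h1
      simpa [hq.ne'] using h1
    · rcases Nat.lt_or_ge k n with hkn | hkn
      · have := hj k h hkn
        simpa [(hc k).ne'] using this
      · rw [show k = n by omega, han]
  · have ha0 : a 0 = 0 := by
      rw [han] at h0
      simpa [hl] using h0.symm
    have ha1 : a 1 = 0 := by
      rw [han, ha0] at h1
      simpa [hl] using h1.symm
    have : ∀ k, k + 1 ≤ n → a (k + 1) = 0 := by
      intro k
      induction k with
      | zero => intro _; exact ha1
      | succ k ih =>
        intro hk
        have h := hj (k + 1) (by omega) (by omega)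
        rw [ih (by omega)] at h
        simpa [hl] using h.symm
    intro k hk
    rcases Nat.eq_zero_or_pos k with rfl | h
    · exact ha0
    · obtain ⟨k, rfl⟩ : ∃ k', k = k' + 1 := ⟨k - 1, by omega⟩
      exact this k hk

/-- In a cone with `n + 1` generators the linear relation is unique up to scaling, hence an
eigenvector for every matrix lifting `A`. -/
lemma exists_rel (hK : IsProperCone K) {z : Fin (n + 1) → Fin n → ℝ} (hg : K = ConeGen z)
    {C : Fin (n + 1) → Fin (n + 1) → ℝ}
    (hAC : ∀ i, A.mulVec (z i) = ∑ j, C i j • z j) :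
    ∃ (α : Fin (n + 1) → ℝ) (lam : ℝ), α ≠ 0 ∧ ∑ j, α j • z j = 0 ∧
      ∀ j, ∑ i, α i * C i j = lam * α j := by
  let Φ : (Fin (n + 1) → ℝ) →ₗ[ℝ] (Fin n → ℝ) := Fintype.linearCombination ℝ z
  have hΦ : ∀ c, Φ c = ∑ j, c j • z j := fun c => Fintype.linearCombination_apply ..
  have hsurj : LinearMap.range Φ = ⊤ := by
    rw [LinearMap.range_eq_top]
    intro w
    obtain ⟨u, hu⟩ := hK.2.2.2.2
    obtain ⟨c, hc, hw⟩ := dom_of_int hu w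
    have hu' := interior_subset hu
    rw [hg] at hu' hw
    obtain ⟨a, -, ha⟩ := hu'
    obtain ⟨b, -, hb⟩ := hw
    refine ⟨c⁻¹ • (a - b), ?_⟩
    rw [map_smul, map_sub, hΦ, hΦ, ← ha, ← hb, sub_sub_cancel, smul_smul, inv_mul_cancel₀ hc.ne',
      one_smul]
  have hker : Module.finrank ℝ (LinearMap.ker Φ) = 1 := by
    have := LinearMap.finrank_range_add_finrank_ker Φ
    rw [hsurj, finrank_top] at this
    simp at this
    omega
  obtain ⟨⟨α, hα⟩, hα0, huniq⟩ := finrank_eq_one_iff'.1 hker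
  have hD : (fun j => ∑ i, α i * C i j) ∈ LinearMap.ker Φ := by
    rw [LinearMap.mem_ker] at hα ⊢
    rw [hΦ] at hα ⊢
    have := congrArg A.mulVec hα
    rw [Matrix.mulVec_zero, Matrix.mulVec_sum] at this
    simp only [Matrix.mulVec_smul, hAC, Finset.smul_sum, smul_smul] at this
    rw [Finset.sum_comm] at this
    simpa only [Finset.sum_smul] using this
  obtain ⟨lam, hlam⟩ := huniq ⟨_, hD⟩
  refine ⟨α, lam, fun h => hα0 (by ext1; exact h), ?_, fun j => ?_⟩
  · rw [← hΦ]; exact hα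
  · have := congrFun (congrArg Subtype.val hlam) j
    simpa using this.symm

lemma exists_neg_rel (hn : 3 ≤ n) (he : Even n) (hK : IsProperCone K)
    {z : Fin (n + 1) → Fin n → ℝ} (hg : K = ConeGen z) (hz : ∀ j, z j ≠ 0)
    {C : Fin (n + 1) → Fin (n + 1) → ℝ} (hC : ∀ i j, 0 ≤ C i j)
    (hAC : ∀ i, A.mulVec (z i) = ∑ j, C i j • z j)
    (hedge : ∀ s r : Fin (n + 1), 0 < C s r → r.val = s.val + 1 ∨ (s.val = n ∧ r.val ≤ 1))
    (hfw : ∀ s r : Fin (n + 1), r.val = s.val + 1 → 0 < C s r)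
    (hback : ∀ s r : Fin (n + 1), s.val = n → r.val ≤ 1 → 0 < C s r) :
    ∃ α : Fin (n + 1) → ℝ, ∑ j, α j • z j = 0 ∧ ∀ j, j.val ≤ 1 → α j < 0 := by
  obtain ⟨α, lam, hα0, hα, hlam⟩ := exists_rel hK hg hAC
  have hzero : ∀ s r : Fin (n + 1), ¬ (r.val = s.val + 1 ∨ (s.val = n ∧ r.val ≤ 1)) → C s r = 0 :=
    fun s r h => le_antisymm (not_lt.1 fun h' => h (hedge s r h')) (hC s r)
  have hzK : ∀ j, z j ∈ K := fun j => hg ▸ gen_mem z j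
  have hpos : ∀ β : Fin (n + 1) → ℝ, ∑ j, β j • z j = 0 → ¬ ∀ j, 0 < β j := by
    intro β hβ h
    have := cone_sum_zero hK _ _ (fun j _ => hK.2.2.1 _ (h j).le _ (hzK j)) hβ 0 (Finset.mem_univ _)
    rw [smul_eq_zero] at this
    exact this.elim (h 0).ne' (hz 0)
  let F : ℕ → Fin (n + 1) := fun k => Fin.ofNat (n + 1) k
  have hF : ∀ k, k ≤ n → (F k).val = k := fun k hk => by
    simp [F, Fin.ofNat, Nat.mod_eq_of_lt (Nat.lt_succ_of_le hk)]
  have hF' : ∀ j : Fin (n + 1), F j.val = j := fun j => by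
    ext; exact hF _ (by omega)
  have h0 : α (F n) * C (F n) (F 0) = lam * α (F 0) := by
    rw [← hlam]
    symm
    refine Finset.sum_eq_single (F n) (fun i _ hi => ?_) (by simp)
    rw [hzero, mul_zero]
    rw [hF 0 (by omega)]
    rintro (h | ⟨h, -⟩)
    · omega
    · exact hi (by ext; rw [h, hF n le_rfl])
  have h1 : α (F 0) * C (F 0) (F 1) + α (F n) * C (F n) (F 1) = lam * α (F 1) := by
    rw [← hlam]
    symm
    refine Finset.sum_eq_add (F 0) (F n) ?_ (fun i _ hi => ?_) (by simp) (by simp)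
    · intro h
      have := congrArg Fin.val h
      rw [hF 0 (by omega), hF n le_rfl] at this
      omega
    rw [hzero, mul_zero]
    rw [hF 1 (by omega)]
    rintro (h | ⟨h, -⟩)
    · exact hi.1 (by ext; rw [hF 0 (by omega)]; omega)
    · exact hi.2 (by ext; rw [h, hF n le_rfl])
  have hj : ∀ j, 1 ≤ j → j < n → α (F j) * C (F j) (F (j + 1)) = lam * α (F (j + 1)) := by
    intro j hj1 hj2
    rw [← hlam]
    symm
    refine Finset.sum_eq_single (F j) (fun i _ hi => ?_) (by simp)
    rw [hzero, mul_zero]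
    rw [hF (j + 1) (by omega)]
    rintro (h | ⟨h, h'⟩)
    · exact hi (by ext; rw [hF j (by omega)]; omega)
    · omega
  have hp : 0 < C (F n) (F 0) := hback _ _ (hF n le_rfl) (by rw [hF 0 (by omega)]; omega)
  have hr : 0 < C (F n) (F 1) := hback _ _ (hF n le_rfl) (by rw [hF 1 (by omega)])
  have hq : 0 < C (F 0) (F 1) := hfw _ _ (by rw [hF 0 (by omega), hF 1 (by omega)])
  -- positive coefficient function
  let c : ℕ → ℝ := fun j => if j < n then C (F j) (F (j + 1)) else 1
  have hc : ∀ j, 0 < c j := by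
    intro j
    by_cases h : j < n
    · simp only [c, h, if_true]
      exact hfw _ _ (by rw [hF j (by omega), hF (j + 1) (by omega)])
    · simp [c, h]
  have hcj : ∀ j, j < n → c j = C (F j) (F (j + 1)) := fun j h => by simp [c, h]
  have conclude : ∀ β : Fin (n + 1) → ℝ, β (F 0) < 0 ∧ β (F 1) < 0 → ∀ j : Fin (n + 1),
      j.val ≤ 1 → β j < 0 := by
    intro β h j hj
    rw [← hF' j]
    interval_cases hjv : j.val
    · exact h.1
    · exact h.2
  rcases lt_trichotomy (α (F n)) 0 with hs | hs | hs
  · refine ⟨-α, by simp [hα], conclude _ ?_⟩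
    refine sign_core (a := fun k => (-α) (F k)) (c := c) (lam := lam) hn he hp hq hr hc ?_ ?_ ?_ ?_ ?_
    · simp; linarith
    · simp; linarith
    · intro j h1 h2
      have := hj j h1 h2
      simp [hcj j h2]; linarith
    · simpa using hs
    · intro h
      refine hpos (-α) (by simp [hα]) fun j => ?_
      have := h j.val (by omega)
      rwa [hF'] at this
  · exfalso
    apply hα0
    have := zero_core (a := fun k => α (F k)) (c := c) (lam := lam) hq hc h0 h1
      (fun j h1 h2 => by rw [hcj j h2]; exact hj j h1 h2) hs
    ext j
    have h := this j.val (by omega)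
    rwa [hF'] at h
  · refine ⟨α, hα, conclude _ ?_⟩
    refine sign_core (a := fun k => α (F k)) (c := c) (lam := lam) hn he hp hq hr hc h0 h1
      (fun j h1 h2 => by rw [hcj j h2]; exact hj j h1 h2) hs ?_
    intro h
    refine hpos α hα fun j => ?_
    have := h j.val (by omega)
    rwa [hF'] at this

lemma pos_comb_int (hK : IsProperCone K) {m : ℕ} {z : Fin m → Fin n → ℝ} (hg : K = ConeGen z)
    {c : Fin m → ℝ} (hc : ∀ j, 0 < c j) : ∑ j, c j • z j ∈ interior K := by
  obtain ⟨u, hu⟩ := hK.2.2.2.2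
  have hu' := interior_subset hu
  rw [hg] at hu'
  obtain ⟨d, hd, hd'⟩ := hu'
  have hD : 0 ≤ ∑ j, d j / c j := Finset.sum_nonneg fun j _ => div_nonneg (hd j) (hc j).le
  refine int_of_dom hK ⟨(1 + ∑ j, d j / c j)⁻¹, by positivity, ?_⟩ hu
  rw [hd', hg]
  refine ⟨fun j => c j - (1 + ∑ j, d j / c j)⁻¹ * d j, fun j => ?_, ?_⟩
  · rw [sub_nonneg, inv_mul_le_iff₀ (by positivity)]
    have : d j / c j ≤ ∑ j, d j / c j :=
      Finset.single_le_sum (f := fun j => d j / c j) (fun j _ => div_nonneg (hd j) (hc j).le)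
        (Finset.mem_univ j)
    rw [div_le_iff₀ (hc j)] at this
    linarith [hc j]
  · simp only [sub_smul, Finset.sum_sub_distrib, Finset.smul_sum, smul_smul]

lemma wielandt_int (hn : 3 ≤ n) (he : Even n) (hK : IsProperCone K) (hA : KNonneg K A)
    {z : Fin (n + 1) → Fin n → ℝ} (hg : K = ConeGen z) (hz : ∀ j, z j ≠ 0)
    {C : Fin (n + 1) → Fin (n + 1) → ℝ} (hC : ∀ i j, 0 ≤ C i j)
    (hAC : ∀ i, A.mulVec (z i) = ∑ j, C i j • z j)
    (hedge : ∀ s r : Fin (n + 1), 0 < C s r → r.val = s.val + 1 ∨ (s.val = n ∧ r.val ≤ 1))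
    (hfw : ∀ s r : Fin (n + 1), r.val = s.val + 1 → 0 < C s r)
    (hback : ∀ s r : Fin (n + 1), s.val = n → r.val ≤ 1 → 0 < C s r) :
    (A ^ (n * (n - 1))).mulVec (z 0) ∈ interior K := by
  classical
  obtain ⟨α, hα, hneg⟩ := exists_neg_rel hn he hK hg hz hC hAC hedge hfw hback
  have hzK : ∀ j, z j ∈ K := fun j => hg ▸ gen_mem z j
  have fwd : ∀ (d : ℕ) (a b : Fin (n + 1)), b.val = a.val + d →
      Dom K ((A ^ d).mulVec (z a)) (z b) := by
    intro d
    induction d with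
    | zero =>
      intro a b h
      have : b = a := by ext; omega
      subst this
      simpa using Dom.refl hK _
    | succ d ih =>
      intro a b h
      have hb := b.2
      exact W_trans hK hA (ih a ⟨a.val + d, by omega⟩ rfl)
        (W_edge hK hg hC hAC (hfw _ _ (by simp only; omega)))
  let o : Fin (n + 1) := ⟨1, by omega⟩
  let L : Fin (n + 1) := ⟨n, by omega⟩
  have loop0 : Dom K ((A ^ (n + 1)).mulVec (z 0)) (z 0) :=
    W_trans hK hA (fwd n 0 L (by simp [L])) (W_edge hK hg hC hAC (hback _ _ rfl (by simp)))
  have loop1 : Dom K ((A ^ n).mulVec (z o)) (z o) := by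
    have := W_trans hK hA (fwd (n - 1) o L (by simp [L, o]; omega))
      (W_edge hK hg hC hAC (hback L o rfl le_rfl))
    rwa [show n - 1 + 1 = n by omega] at this
  have hdom : ∀ j : Fin (n + 1), 2 ≤ j.val → Dom K ((A ^ (n * (n - 1))).mulVec (z 0)) (z j) := by
    intro j hj
    obtain ⟨i, hi⟩ : ∃ i, j.val = i + 2 := ⟨j.val - 2, by omega⟩
    obtain ⟨p, hp⟩ : ∃ p, n = i + 2 + p := ⟨n - (i + 2), by omega⟩
    have h := W_trans hK hA (W_loop hK hA loop0 p) (W_trans hK hA (fwd 1 0 o (by simp [o]))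
      (W_trans hK hA (W_loop hK hA loop1 i) (fwd (i + 1) o j (by simp [o]; omega))))
    have e : p * (n + 1) + (1 + (i * n + (i + 1))) = n * (n - 1) := by
      rw [hp, show i + 2 + p - 1 = i + 1 + p by omega]; ring
    rwa [e] at h
  set u := (A ^ (n * (n - 1))).mulVec (z 0) with hu
  have huK : u ∈ K := knn_pow hA _ _ (hzK 0)
  -- `u` dominates the sum of `z j`, `j ≥ 2`
  set S : Finset (Fin (n + 1)) := Finset.univ.filter fun j => 2 ≤ j.val with hS
  have hsum : ∃ c : ℝ, 0 ≤ c ∧ c • u - ∑ j ∈ S, z j ∈ K := by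
    have : ∀ j ∈ S, ∃ c : ℝ, 0 ≤ c ∧ c • u - z j ∈ K := by
      intro j hj
      obtain ⟨c, hc, h⟩ := hdom j (by simpa [hS] using hj)
      refine ⟨c⁻¹, by positivity, ?_⟩
      have := hK.2.2.1 c⁻¹ (by positivity) _ h
      rwa [smul_sub, smul_smul, inv_mul_cancel₀ hc.ne', one_smul] at this
    choose! c hc hcK using this
    refine ⟨∑ j ∈ S, c j, Finset.sum_nonneg hc, ?_⟩
    have := cone_sum hK S _ hcK
    rwa [Finset.sum_sub_distrib, ← Finset.sum_smul] at this
  have hintr : ∑ j ∈ S, z j ∈ interior K := by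
    have hM : 0 ≤ ∑ j, |α j| := Finset.sum_nonneg fun j _ => abs_nonneg _
    set s : ℝ := (1 + ∑ j, |α j|)⁻¹ with hs
    have hs0 : 0 < s := by positivity
    have e : ∑ j ∈ S, z j = ∑ j, ((if 2 ≤ j.val then 1 else 0) - s * α j) • z j := by
      simp only [sub_smul, Finset.sum_sub_distrib, mul_smul]
      rw [← Finset.smul_sum, hα, smul_zero, sub_zero, hS, Finset.sum_filter]
      refine Finset.sum_congr rfl fun j _ => ?_
      split_ifs <;> simp
    rw [e]
    refine pos_comb_int hK hg fun j => ?_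
    by_cases h : 2 ≤ j.val
    · simp only [h, if_true, sub_pos]
      rw [hs, inv_mul_lt_iff₀ (by positivity)]
      have : |α j| ≤ ∑ j, |α j| :=
        Finset.single_le_sum (f := fun j => |α j|) (fun j _ => abs_nonneg _) (Finset.mem_univ j)
      linarith [le_abs_self (α j)]
    · have := hneg j (by omega)
      simp only [h, if_false, zero_sub]
      nlinarith
  obtain ⟨c, hc, h⟩ := hsum
  refine int_of_dom hK ⟨1 / (c + 1), by positivity, ?_⟩ hintr
  have := hK.2.2.1 (1 / (c + 1)) (by positivity) _ (hK.2.1 _ h _ huK)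
  convert this using 1
  ext i
  simp
  field_simp
  ring

lemma even_core (hn : 3 ≤ n) (he : Even n) (hK : IsProperCone K) (hA : KPrimitive K A)
    {x : Fin (n + 1) → Fin n → ℝ} (hg : K = ConeGen x) (hext : ∀ j, IsExtremeVec K (x j))
    (i0 : Fin (n + 1)) : (A ^ (n * (n - 1))).mulVec (x i0) ∈ interior K := by
  by_contra hnot
  have hn2 : 2 ≤ n := by omega
  obtain ⟨B, hB, hAB⟩ := exists_B hA.1 hg
  obtain ⟨f, hf, hs⟩ := exists_nonsurj hK hn2 hA hext hB hAB i0
  have hstar : ∀ t l j, 0 < l → Dom K ((A ^ t).mulVec (x i0)) (x j) →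
      Dom K ((A ^ l).mulVec (x j)) (x j) → ¬ t + l * (n - 1) ≤ n * (n - 1) :=
    fun t l j hl h1 h2 h => hnot (closed_int hK hn2 hA (hext j) hl h1 h2 h)
  -- arithmetic criteria
  have ar1 : ∀ t l, l ≤ n - 1 → t + l ≤ n + 1 → t + l * (n - 1) ≤ n * (n - 1) := by
    intro t l h1 h2
    obtain ⟨k, rfl⟩ : ∃ k, n = k + 3 := ⟨n - 3, by omega⟩
    simp only [show k + 3 - 1 = k + 2 by omega] at *
    nlinarith
  let v : ℕ → Fin (n + 1) := fun k => f^[k] i0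
  have hfw : ∀ a d, Dom K ((A ^ d).mulVec (x (v a))) (x (v (a + d))) := by
    intro a d
    have := W_iter hK hA.1 hg hB hAB hf d (v a)
    simp only [v] at this ⊢
    rwa [← Function.iterate_add_apply, add_comm d a] at this
  have hfw0 : ∀ d, Dom K ((A ^ d).mulVec (x i0)) (x (v d)) := by
    intro d
    have := hfw 0 d
    rwa [zero_add] at this
  have hv1 : v (n + 1) = v 1 := by
    obtain ⟨t, l, ht, hl, htl, hee⟩ := pigeon hs i0
    have h2 := hfw t l
    rw [show v (t + l) = v t from hee] at h2
    have h3 := hstar t l (v t) hl (hfw0 t) h2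
    have h4 : ¬ l ≤ n - 1 := fun h => h3 (ar1 t l h htl)
    have h5 : t = 1 := by omega
    have h6 : l = n := by omega
    subst h5
    have : v (1 + l) = v 1 := hee
    rw [h6, show 1 + n = n + 1 from add_comm 1 n] at this
    exact this
  have hinj : ∀ s s', s < s' → s' ≤ n → v s ≠ v s' := by
    intro s s' h1 h2 h3
    have h4 := hfw s (s' - s)
    rw [show s + (s' - s) = s' by omega, ← h3] at h4
    refine hstar s (s' - s) (v s) (by omega) (hfw0 s) h4 ?_
    rcases Nat.eq_zero_or_pos s with rfl | h
    · have : (s' - 0) * (n - 1) ≤ n * (n - 1) := Nat.mul_le_mul_right _ (by omega)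
      omega
    · exact ar1 _ _ (by omega) (by omega)
  have hbij : Function.Bijective (fun k : Fin (n + 1) => v k.val) := by
    rw [← Finite.injective_iff_bijective]
    intro a b hab
    by_contra hne
    rcases lt_or_gt_of_ne hne with h | h
    · exact hinj a b h (by omega) hab
    · exact hinj b a h (by omega) hab.symm
  let e := Equiv.ofBijective _ hbij
  have hev : ∀ k, e k = v k.val := fun k => rfl
  let z : Fin (n + 1) → Fin n → ℝ := fun k => x (e k)
  let C : Fin (n + 1) → Fin (n + 1) → ℝ := fun s r => B (e s) (e r)
  have hzext : ∀ j, IsExtremeVec K (z j) := fun j => hext _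
  have hC : ∀ s r, 0 ≤ C s r := fun s r => hB _ _
  have hAC : ∀ i, A.mulVec (z i) = ∑ j, C i j • z j := by
    intro i
    simp only [z, C]
    rw [hAB, ← Equiv.sum_comp e]
  have hgz : K = ConeGen z := by
    rw [hg]
    ext w
    constructor
    · rintro ⟨c, hc, rfl⟩
      exact ⟨fun j => c (e j), fun j => hc _, (Equiv.sum_comp e (fun j => c j • x j)).symm⟩
    · rintro ⟨c, hc, rfl⟩
      refine ⟨fun j => c (e.symm j), fun j => hc _, ?_⟩
      rw [← Equiv.sum_comp e (fun j => c (e.symm j) • x j)]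
      simp [z]
  have hz0 : z 0 = x i0 := rfl
  have hCfw : ∀ s r : Fin (n + 1), r.val = s.val + 1 → 0 < C s r := by
    intro s r h
    have : e r = f (e s) := by
      rw [hev, hev, h]
      simp only [v]
      rw [Function.iterate_succ_apply']
    simp only [C, this]
    exact hf _
  have hC1 : ∀ s r : Fin (n + 1), s.val = n → r.val = 1 → 0 < C s r := by
    intro s r h h'
    have : e r = f (e s) := by
      rw [hev, hev, h, h', ← hv1]
      simp only [v]
      rw [Function.iterate_succ_apply']
    simp only [C, this]
    exact hf _
  -- walks in the new labels
  have zfw : ∀ (d : ℕ) (a b : Fin (n + 1)), b.val = a.val + d →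
      Dom K ((A ^ d).mulVec (z a)) (z b) := by
    intro d a b h
    have := hfw a.val d
    rw [← h] at this
    exact this
  have zstar : ∀ t l (j : Fin (n + 1)), 0 < l → Dom K ((A ^ t).mulVec (z 0)) (z j) →
      Dom K ((A ^ l).mulVec (z j)) (z j) → ¬ t + l * (n - 1) ≤ n * (n - 1) :=
    fun t l j => hstar t l (e j)
  have zedge : ∀ s r, 0 < C s r → Dom K ((A ^ 1).mulVec (z s)) (z r) :=
    fun s r h => W_edge hK hgz hC hAC h
  have hback0 : ∀ s r : Fin (n + 1), r.val = 0 → 0 < C s r → s.val = n := by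
    intro s r hr h
    by_contra hsn
    have hr : r = 0 := by ext; simpa using hr
    subst hr
    have h1 := W_trans hK hA.1 (zfw s.val 0 s (by simp)) (zedge s 0 h)
    refine zstar 0 _ 0 (by omega) (by simpa using Dom.refl hK _) h1 ?_
    rw [zero_add]
    exact Nat.mul_le_mul_right _ (by omega)
  have hback : ∀ s r : Fin (n + 1), 1 ≤ r.val → r.val ≤ s.val → 0 < C s r →
      r.val = 1 ∧ s.val = n := by
    intro s r h1 h2 h
    by_contra hne
    have h3 := W_trans hK hA.1 (zfw (s.val - r.val) r s (by omega)) (zedge s r h)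
    exact zstar r.val _ r (by omega) (zfw r.val 0 r (by simp)) h3 (ar1 _ _ (by omega) (by omega))
  have hjump : ∀ s r : Fin (n + 1), 1 ≤ s.val → s.val + 2 ≤ r.val → ¬ 0 < C s r := by
    intro s r h1 h2 h
    let o : Fin (n + 1) := ⟨1, by omega⟩
    let L : Fin (n + 1) := ⟨n, by omega⟩
    have h3 := W_trans hK hA.1 (zfw (s.val - 1) o s (by simp [o]; omega))
      (W_trans hK hA.1 (zedge s r h) (W_trans hK hA.1 (zfw (n - r.val) r L (by simp [L]; omega))
        (zedge L o (hC1 L o rfl rfl))))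
    exact zstar 1 _ o (by omega) (zfw 1 0 o (by simp [o])) h3 (ar1 _ _ (by omega) (by omega))
  let L : Fin (n + 1) := ⟨n, by omega⟩
  let o : Fin (n + 1) := ⟨1, by omega⟩
  have hL0 : 0 < C L 0 := by
    by_contra hL
    refine no_perm hK hn2 hA hzext (fun j => 1 ≤ j.val) ?_ o le_rfl
    intro s hs1
    have hcol0 : ∀ r : Fin (n + 1), r.val = 0 → C s r = 0 := by
      intro r hr
      refine le_antisymm (not_lt.1 fun h => hL ?_) (hC _ _)
      have h1 := hback0 s r hr h
      have h2 : s = L := by ext; exact h1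
      have h3 : r = 0 := by ext; simpa using hr
      rw [← h2, ← h3]; exact h
    by_cases hsn : s.val = n
    · refine ⟨o, le_rfl, C s o, hC _ _, ?_⟩
      rw [hAC]
      refine Finset.sum_eq_single _ (fun r _ hr => ?_) (by simp)
      have : C s r = 0 := by
        rcases Nat.eq_zero_or_pos r.val with h0 | h0
        · exact hcol0 r h0
        · refine le_antisymm (not_lt.1 fun h => hr ?_) (hC _ _)
          ext
          exact (hback s r h0 (by omega) h).1
      rw [this, zero_smul]
    · refine ⟨⟨s.val + 1, by omega⟩, by simp, C s ⟨s.val + 1, by omega⟩, hC _ _, ?_⟩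
      rw [hAC]
      refine Finset.sum_eq_single _ (fun r _ hr => ?_) (by simp)
      have : C s r = 0 := by
        rcases Nat.eq_zero_or_pos r.val with h0 | h0
        · exact hcol0 r h0
        · refine le_antisymm (not_lt.1 fun h => ?_) (hC _ _)
          rcases Nat.lt_or_ge s.val r.val with h1 | h1
          · refine hjump s r hs1 ?_ h
            have : r.val ≠ s.val + 1 := fun h' => hr (by ext; exact h')
            omega
          · exact hsn (hback s r h0 h1 h).2
      rw [this, zero_smul]
  have hjump0 : ∀ s r : Fin (n + 1), s.val = 0 → 2 ≤ r.val → ¬ 0 < C s r := by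
    intro s r h1 h2 h
    have hs0 : s = 0 := by ext; simpa using h1
    subst hs0
    have h3 := (W_trans hK hA.1 (zedge 0 r h) (W_trans hK hA.1
      (zfw (n - r.val) r L (by simp [L]; omega)) (zedge L 0 hL0)))
    refine zstar 0 _ 0 (by omega) (by simpa using Dom.refl hK _) h3 ?_
    rw [zero_add]
    exact Nat.mul_le_mul_right _ (by omega)
  rw [← hz0] at hnot
  refine hnot (wielandt_int hn he hK hA.1 hgz (fun j => (hzext j).2.1) hC hAC ?_ hCfw ?_)
  · intro s r h
    by_contra hcon
    push Not at hcon
    rcases Nat.eq_zero_or_pos r.val with h0 | h0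
    · have := hback0 s r h0 h
      have := hcon.2 this
      omega
    · rcases Nat.lt_or_ge s.val r.val with h1 | h1
      · rcases Nat.eq_zero_or_pos s.val with h2 | h2
        · exact hjump0 s r h2 (by omega) h
        · exact hjump s r h2 (by omega) h
      · have h3 := hback s r h0 h1 h
        have := hcon.2 h3.2
        omega
  · intro s r h1 h2
    rcases Nat.eq_zero_or_pos r.val with h0 | h0
    · have hs : s = L := by ext; exact h1
      have hr : r = 0 := by ext; simpa using h0
      rw [hs, hr]; exact hL0
    · exact hC1 s r h1 (by omega)

lemma upper_even (hn : 3 ≤ n) (he : Even n) (hK : MemP (n + 1) K) (hA : KPrimitive K A) :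
    KPositive K (A ^ (n ^ 2 - n)) := by
  obtain ⟨m, x, hm, hg, hext⟩ := exists_gen (by omega) hK
  have e : n ^ 2 - n = n * (n - 1) := by rw [Nat.mul_sub, mul_one, pow_two]
  rw [e]
  rcases Nat.lt_or_ge m (n + 1) with h | h
  · refine upper_gen hK.1.1 (by omega) hA hg hext ?_
    have : (n - 2) * (m - 1) ≤ (n - 2) * (n - 1) := Nat.mul_le_mul_left _ (by omega)
    obtain ⟨n, rfl⟩ : ∃ n', n = n' + 2 := ⟨n - 2, by omega⟩
    simp only [Nat.add_sub_cancel, show n + 2 - 1 = n + 1 by omega] at *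
    nlinarith
  · obtain rfl : m = n + 1 := by omega
    exact gen_positive hK.1.1 hA.1 hg fun i => even_core hn he hK.1.1 hA hg hext i

end even

section construction

/-- Coefficients of the iterates of the first generator. -/
def D (n : ℕ) (b : ℝ) : ℕ → ℕ → ℝ
  | 0, j => if j = 0 then 1 else 0
  | k + 1, 0 => 2 * D n b k n
  | k + 1, j + 1 => D n b k j + if j = 0 then b * D n b k n else 0

lemma D_nonneg {n : ℕ} {b : ℝ} (hb : 0 < b) (k j : ℕ) : 0 ≤ D n b k j := by
  induction k generalizing j with
  | zero => simp only [D]; split_ifs <;> norm_num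
  | succ k ih =>
    cases j with
    | zero => simp only [D]; linarith [ih n]
    | succ j =>
      simp only [D]
      have := ih j
      have := ih n
      split_ifs <;> positivity

lemma D_init {n : ℕ} {b : ℝ} (k j : ℕ) (hk : k ≤ n) (hj : j ≤ n) :
    D n b k j = if j = k then 1 else 0 := by
  induction k generalizing j with
  | zero => simp only [D]
  | succ k ih =>
    have h : D n b k n = 0 := by
      rw [ih n (by omega) le_rfl, if_neg (by omega)]
    cases j with
    | zero => simp [D, h]
    | succ j => simp [D, h, ih j (by omega) (by omega)]

lemma D_support {n : ℕ} {b : ℝ} (hn : 1 ≤ n) (k j : ℕ) (hj : j ≤ n) (h : D n b k j ≠ 0) :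
    ∃ p q, k = j + p * (n + 1) + q * n ∧ (j = 0 → 0 < q → 0 < p) := by
  induction k generalizing j with
  | zero =>
    have : j = 0 := by
      by_contra h'
      simp [D, h'] at h
    exact ⟨0, 0, by omega, by omega⟩
  | succ k ih =>
    cases j with
    | zero =>
      have h' : D n b k n ≠ 0 := by
        intro h0
        simp [D, h0] at h
      obtain ⟨p, q, hpq, -⟩ := ih n le_rfl h'
      exact ⟨p + 1, q, by rw [hpq]; ring, by omega⟩
    | succ j =>
      by_cases h1 : D n b k j = 0
      · have h2 : j = 0 ∧ D n b k n ≠ 0 := by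
          by_contra hc
          apply h
          simp only [D, h1, zero_add]
          by_cases hj0 : j = 0
          · have : D n b k n = 0 := by
              by_contra h'
              exact hc ⟨hj0, h'⟩
            simp [this]
          · simp [hj0]
        obtain ⟨p, q, hpq, -⟩ := ih n le_rfl h2.2
        refine ⟨p, q + 1, by rw [hpq, h2.1]; ring, by omega⟩
      · obtain ⟨p, q, hpq, -⟩ := ih j (by omega) h1
        exact ⟨p, q, by omega, by omega⟩

lemma D_vanish {n : ℕ} {b : ℝ} (hn : 3 ≤ n) (j : ℕ) (hj : j ≤ 1) : D n b (n * (n - 1)) j = 0 := by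
  by_contra h
  obtain ⟨p, q, hpq, h0⟩ := D_support (by omega) _ j (by omega) h
  obtain ⟨n, rfl⟩ : ∃ n', n = n' + 1 := ⟨n - 1, by omega⟩
  rw [Nat.add_sub_cancel] at hpq
  have hdvd : (n + 1) ∣ j + p := by
    have h1 : (n + 1) ∣ (j + p) + (n + 1) * (p + q) := ⟨n, by rw [hpq]; ring⟩
    exact (Nat.dvd_add_left (dvd_mul_right _ _)).1 h1
  rcases Nat.eq_zero_or_pos (j + p) with hz | hz
  · have hj0 : j = 0 := by omega
    have hp0 : p = 0 := by omega
    subst hj0 hp0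
    have : ¬ 0 < q := fun hq => absurd (h0 rfl hq) (by omega)
    have : q = 0 := by omega
    subst this
    simp at hpq
    omega
  · have := Nat.le_of_dvd hz hdvd
    have hp : n ≤ p := by omega
    nlinarith [Nat.zero_le (q * (n + 1)), Nat.mul_le_mul_right (n + 1 + 1) hp]

lemma D_shift {n : ℕ} {b : ℝ} (hb : 0 < b) (k j d : ℕ) (h : 0 < D n b k j) :
    0 < D n b (k + d) (j + d) := by
  induction d with
  | zero => exact h
  | succ d ih =>
    rw [← add_assoc, ← add_assoc]
    simp only [D]
    have := D_nonneg hb (n := n) (k + d) n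
    split_ifs <;> positivity

lemma D_pos_n {n : ℕ} {b : ℝ} (hb : 0 < b) (hn : 3 ≤ n) (k : ℕ) (h : 0 < D n b k 1) :
    0 < D n b (k + n) 1 ∧ 0 < D n b (k + n) 0 ∧ 0 < D n b (k + (n + 1)) 1 := by
  have h1 := D_shift hb k 1 (n - 1) h
  rw [show 1 + (n - 1) = n by omega] at h1
  obtain ⟨m, rfl⟩ : ∃ m, n = m + 1 := ⟨n - 1, by omega⟩
  rw [Nat.add_sub_cancel] at h1
  have h2 := D_nonneg hb (n := m + 1) (k + m) 0
  have h4 : 0 < D (m + 1) b (k + (m + 1)) 0 := by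
    rw [← add_assoc]; simp only [D]; positivity
  refine ⟨?_, h4, ?_⟩
  · rw [← add_assoc]; simp only [D, if_true]; positivity
  · have h3 := D_nonneg hb (n := m + 1) (k + (m + 1)) (m + 1)
    rw [← add_assoc]
    simp only [D, if_true]; positivity

lemma D_pos_one {n : ℕ} {b : ℝ} (hb : 0 < b) (hn : 3 ≤ n) (p q : ℕ) :
    0 < D n b (1 + p * n + q * (n + 1)) 1 := by
  induction q with
  | zero =>
    induction p with
    | zero => 
      rw [zero_mul, zero_mul, add_zero, add_zero, D_init 1 1 (by omega) (by omega)]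
      simp
    | succ p ih =>
      have := (D_pos_n hb hn _ ih).1
      convert this using 2
      ring
  | succ q ih =>
    have := (D_pos_n hb hn _ ih).2.2
    convert this using 2
    ring

lemma D_pos_one' {n : ℕ} {b : ℝ} (hb : 0 < b) (hn : 3 ≤ n) (k : ℕ) (hk : n * n + 1 ≤ k) :
    0 < D n b k 1 := by
  have hmod := Nat.mod_lt (k - 1) (show 0 < n by omega)
  have hdiv := Nat.div_add_mod (k - 1) n
  have hq : n ≤ (k - 1) / n := by
    rw [Nat.le_div_iff_mul_le (by omega)]; omega
  obtain ⟨d, hd⟩ := Nat.exists_eq_add_of_le (hmod.le.trans hq)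
  have := D_pos_one hb hn d ((k - 1) % n)
  convert this using 2
  rw [hd] at hdiv
  have : k = (k - 1) + 1 := by omega
  rw [this, ← hdiv]
  simp
  ring_nf

lemma D_pos {n : ℕ} {b : ℝ} (hb : 0 < b) (hn : 3 ≤ n) (k : ℕ) (hk : n * n + 1 + n ≤ k) (j : ℕ)
    (hj : j ≤ n) : 0 < D n b k j := by
  rcases Nat.eq_zero_or_pos j with rfl | h
  · have := (D_pos_n hb hn (k - n) (D_pos_one' hb hn _ (by omega))).2.1
    rwa [show k - n + n = k by omega] at this
  · have := D_shift hb (k - (j - 1)) 1 (j - 1) (D_pos_one' hb hn _ (by omega))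
    rwa [show k - (j - 1) + (j - 1) = k by omega, show 1 + (j - 1) = j by omega] at this

variable {N : ℕ}

/-- The last generator, in coordinates. -/
def w (N : ℕ) (i : ℕ) : ℝ := if i = 0 then 2 else (-1) ^ (N + i)

/-- The coefficient map. -/
def X (N : ℕ) : (Fin (N + 2) → ℝ) →ₗ[ℝ] (Fin (N + 1) → ℝ) where
  toFun c := fun i => c i.castSucc + c (Fin.last (N + 1)) * w N i
  map_add' c d := by ext i; simp; ring
  map_smul' r c := by ext i; simp; ring

/-- The linear relation among the generators. -/
def al (N : ℕ) (j : ℕ) : ℝ := if j = N + 1 then 1 else - w N j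

/-- The matrix, as a linear map. -/
def Lm (N : ℕ) : (Fin (N + 1) → ℝ) →ₗ[ℝ] (Fin (N + 1) → ℝ) where
  toFun v := fun i =>
    (Fin.cases 0 (fun k : Fin N => v k.castSucc) i : ℝ) + v (Fin.last N) * w N i
  map_add' c d := by
    ext i
    refine Fin.cases ?_ (fun k => ?_) i <;> simp <;> ring
  map_smul' r c := by
    ext i
    refine Fin.cases ?_ (fun k => ?_) i <;> simp <;> ring

/-- The generators. -/
def gen (N : ℕ) (j : Fin (N + 2)) : Fin (N + 1) → ℝ := X N (Pi.single j 1)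

lemma X_eq (c : Fin (N + 2) → ℝ) : X N c = ∑ j, c j • gen N j := by
  conv_lhs => rw [pi_eq_sum_univ c]
  rw [map_sum]
  refine Finset.sum_congr rfl fun j _ => ?_
  rw [map_smul, gen]
  congr 2
  ext i
  simp [Pi.single_apply, eq_comm]

lemma mem_cone (x : Fin (N + 1) → ℝ) :
    x ∈ ConeGen (gen N) ↔ ∃ c : Fin (N + 2) → ℝ, (∀ j, 0 ≤ c j) ∧ x = X N c := by
  simp only [ConeGen, Set.mem_setOf_eq, X_eq]

lemma X_ker {c d : Fin (N + 2) → ℝ} (h : X N c = X N d) :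
    ∃ s : ℝ, ∀ j, c j = d j + s * al N j := by
  refine ⟨c (Fin.last _) - d (Fin.last _), fun j => ?_⟩
  refine Fin.lastCases ?_ (fun i => ?_) j
  · simp [al]
  · have := congrFun h i
    simp only [X, LinearMap.coe_mk, AddHom.coe_mk] at this
    have hi : i.val ≠ N + 1 := by omega
    simp only [al, Fin.val_castSucc, hi, if_false]
    linarith

lemma X_uniq (hN : 2 ≤ N) {d : Fin (N + 2) → ℝ} (hd : ∀ j, 0 ≤ d j) {r : ℝ} {i : Fin (N + 2)}
    (h : X N d = X N (Pi.single i r)) : d = Pi.single i r := by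
  obtain ⟨s, hs⟩ := X_ker h
  have hs' : ∀ j, j ≠ i → 0 ≤ s * al N j.val := by
    intro j hj
    have h1 := hs j
    rw [Pi.single_eq_of_ne hj, zero_add] at h1
    rw [← h1]; exact hd j
  have a0 : al N 0 = -2 := by simp [al, w]
  have aN : al N N = -1 := by
    simp [al, w, show N ≠ 0 by omega, ← two_mul]
  have aN1 : al N (N - 1) = 1 := by
    rw [al, if_neg (by omega), w, if_neg (by omega), Odd.neg_one_pow ⟨N - 1, by omega⟩]
    norm_num
  have al1 : al N (N + 1) = 1 := by simp [al]
  have hs0 : s = 0 := by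
    apply le_antisymm
    · by_cases hi : i.val = 0
      · have := hs' ⟨N, by omega⟩ (by intro h; rw [← h] at hi; simp at hi; omega)
        rw [aN] at this; linarith
      · have := hs' ⟨0, by omega⟩ (by intro h; rw [← h] at hi; simp at hi)
        rw [a0] at this; linarith
    · by_cases hi : i.val = N - 1
      · have := hs' ⟨N + 1, by omega⟩ (by intro h; rw [← h] at hi; simp at hi; omega)
        rw [al1] at this; linarith
      · have := hs' ⟨N - 1, by omega⟩ (by intro h; rw [← h] at hi; simp at hi)
        rw [aN1] at this; linarith
  ext j
  rw [hs j, hs0]; ring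

lemma cone_add {n m : ℕ} (y : Fin m → Fin n → ℝ) : ∀ x ∈ ConeGen y, ∀ z ∈ ConeGen y,
    x + z ∈ ConeGen y := by
  rintro _ ⟨c, hc, rfl⟩ _ ⟨d, hd, rfl⟩
  exact ⟨c + d, fun j => add_nonneg (hc j) (hd j), by simp [add_smul, Finset.sum_add_distrib]⟩

lemma cone_smul {n m : ℕ} (y : Fin m → Fin n → ℝ) : ∀ r : ℝ, 0 ≤ r → ∀ x ∈ ConeGen y,
    r • x ∈ ConeGen y := by
  rintro r hr _ ⟨c, hc, rfl⟩
  exact ⟨r • c, fun j => mul_nonneg hr (hc j), by simp [mul_smul, Finset.smul_sum]⟩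

lemma cone_closed : IsClosed (ConeGen (gen N)) := by
  have e : ConeGen (gen N) = Prod.snd '' {p : unitInterval × (Fin (N + 1) → ℝ) |
      0 ≤ p.2 0 ∧ ∀ i : Fin (N + 1), 0 ≤ p.2 i - p.1.val * p.2 0 / 2 * w N i} := by
    ext x
    rw [mem_cone]
    simp only [Set.mem_image, Set.mem_setOf_eq, Prod.exists, exists_eq_right]
    constructor
    · rintro ⟨c, hc, rfl⟩
      have hx0 : X N c 0 = c 0 + 2 * c (Fin.last _) := by
        simp [X, w]; ring
      have h0 := hc 0
      have hl := hc (Fin.last _)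
      have key : ∃ a : unitInterval, a.val * X N c 0 / 2 = c (Fin.last _) := by
        by_cases hz : X N c 0 = 0
        · refine ⟨0, ?_⟩
          rw [hz] at hx0 ⊢
          simp
          linarith
        · have hpos : 0 < X N c 0 := lt_of_le_of_ne (by rw [hx0]; linarith) (Ne.symm hz)
          refine ⟨⟨2 * c (Fin.last _) / X N c 0, by positivity, ?_⟩, ?_⟩
          · rw [div_le_one hpos]; linarith
          · simp only; field_simp
      obtain ⟨a, ha⟩ := key
      refine ⟨a, by rw [hx0]; linarith, fun i => ?_⟩
      rw [ha]
      simp only [X, LinearMap.coe_mk, AddHom.coe_mk, add_sub_cancel_right]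
      exact hc _
    · rintro ⟨a, h0, h⟩
      refine ⟨Fin.snoc (fun i => x i - a.val * x 0 / 2 * w N i) (a.val * x 0 / 2),
        fun j => ?_, ?_⟩
      · refine Fin.lastCases ?_ (fun i => ?_) j
        · simp only [Fin.snoc_last]
          have := a.2.1
          positivity
        · simp only [Fin.snoc_castSucc]
          exact h i
      · ext i
        simp [X]
  rw [e]
  apply isClosedMap_snd_of_compactSpace
  simp only [Set.setOf_and, Set.setOf_forall]
  refine IsClosed.inter ?_ (isClosed_iInter fun i => ?_)
  · exact isClosed_le continuous_const (by fun_prop)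
  · exact isClosed_le continuous_const (by fun_prop)

lemma cone_proper (hN : 2 ≤ N) : IsProperCone (ConeGen (gen N)) := by
  refine ⟨cone_closed, cone_add _, cone_smul _, ?_, ?_⟩
  · ext x
    simp only [Set.mem_inter_iff, Set.mem_neg, Set.mem_singleton_iff]
    constructor
    · rintro ⟨h1, h2⟩
      rw [mem_cone] at h1 h2
      obtain ⟨c, hc, h1⟩ := h1
      obtain ⟨d, hd, h2⟩ := h2
      have h := X_uniq hN (d := c + d) (fun j => add_nonneg (hc j) (hd j)) (r := 0) (i := 0)
        (by rw [map_add, ← h1, ← h2]; simp)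
      have hc0 : c = 0 := by
        ext j
        have := congrFun h j
        simp at this
        have := hc j
        have := hd j
        simp; linarith
      rw [h1, hc0, map_zero]
    · rintro rfl
      have : (0 : Fin (N + 1) → ℝ) ∈ ConeGen (gen N) := ⟨0, by simp, by simp⟩
      exact ⟨this, by simpa using this⟩
  · refine ⟨fun _ => 1, ?_⟩
    rw [mem_interior]
    refine ⟨{x | ∀ i, 0 < x i}, ?_, ?_, by simp⟩
    · intro x hx
      rw [mem_cone]
      refine ⟨Fin.snoc x 0, fun j => ?_, ?_⟩
      · refine Fin.lastCases ?_ (fun i => ?_) j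
        · simp
        · simpa using (hx i).le
      · ext i; simp [X]
    · simp only [Set.setOf_forall]
      exact isOpen_iInter_of_finite fun i => isOpen_lt continuous_const (by fun_prop)

lemma gen_extreme (hN : 2 ≤ N) (j : Fin (N + 2)) : IsExtremeVec (ConeGen (gen N)) (gen N j) := by
  refine ⟨gen_mem _ j, ?_, ?_⟩
  · intro h0
    have := X_uniq hN (d := Pi.single j 1) (fun i => by
      by_cases h : i = j
      · subst h; simp
      · simp [h]) (r := 0) (i := j) (by rw [← gen, h0]; simp)
    simpa using congrFun this j
  · intro u hu v hv huv
    rw [mem_cone] at hu hv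
    obtain ⟨c, hc, rfl⟩ := hu
    obtain ⟨d, hd, rfl⟩ := hv
    have h := X_uniq hN (d := c + d) (fun j => add_nonneg (hc j) (hd j)) (r := 1) (i := j)
      (by rw [map_add, ← huv, gen])
    have hz : ∀ i, i ≠ j → c i = 0 ∧ d i = 0 := by
      intro i hi
      have h1 := congrFun h i
      rw [Pi.single_eq_of_ne hi, Pi.add_apply] at h1
      have := hc i
      have := hd i
      constructor <;> linarith
    refine ⟨⟨c j, hc j, ?_⟩, ⟨d j, hd j, ?_⟩⟩
    · rw [X_eq]
      exact Finset.sum_eq_single j (fun i _ hi => by rw [(hz i hi).1, zero_smul]) (by simp)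
    · rw [X_eq]
      exact Finset.sum_eq_single j (fun i _ hi => by rw [(hz i hi).2, zero_smul]) (by simp)

lemma cone_memP (hN : 2 ≤ N) : MemP (N + 1 + 1) (ConeGen (gen N)) := by
  classical
  refine ⟨⟨cone_proper hN, _, _, rfl⟩, ?_⟩
  let R : Fin (N + 2) → Set (Fin (N + 1) → ℝ) := fun j => {z | ∃ c : ℝ, 0 ≤ c ∧ z = c • gen N j}
  have hR : ExtremeRays (ConeGen (gen N)) = Set.range R := by
    ext S
    constructor
    · rintro ⟨x, hx, rfl⟩
      obtain ⟨hxK, hx0, hxe⟩ := hx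
      have hxK' := hxK
      obtain ⟨c, hc, hxc⟩ := hxK
      obtain ⟨j, hj⟩ : ∃ j, c j ≠ 0 := by
        by_contra hcon
        push Not at hcon
        exact hx0 (by simp [hxc, hcon])
      have hj' : 0 < c j := lt_of_le_of_ne (hc j) (Ne.symm hj)
      obtain ⟨⟨a, ha, hax⟩, -⟩ := hxe (c j • gen N j) (cone_smul _ _ (hc j) _ (gen_mem _ j))
        (∑ i ∈ Finset.univ.erase j, c i • gen N i)
        (cone_sum (cone_proper hN) _ _ fun i _ => cone_smul _ _ (hc i) _ (gen_mem _ i))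
        (by rw [Finset.add_sum_erase _ (fun i => c i • gen N i) (Finset.mem_univ j)]; exact hxc)
      have ha0 : a ≠ 0 := by
        rintro rfl
        rw [zero_smul, smul_eq_zero] at hax
        exact hax.elim hj (gen_extreme hN j).2.1
      have ha' : 0 < a := lt_of_le_of_ne ha (Ne.symm ha0)
      have hx1 : x = (a⁻¹ * c j) • gen N j := by
        rw [mul_smul, hax, smul_smul, inv_mul_cancel₀ ha0, one_smul]
      have hg1 : gen N j = ((c j)⁻¹ * a) • x := by
        rw [mul_smul, ← hax, smul_smul, inv_mul_cancel₀ hj, one_smul]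
      refine ⟨j, ?_⟩
      ext z
      constructor
      · rintro ⟨r, hr, rfl⟩
        exact ⟨r * ((c j)⁻¹ * a), by positivity, by rw [mul_smul, ← hg1]⟩
      · rintro ⟨r, hr, rfl⟩
        exact ⟨r * (a⁻¹ * c j), by positivity, by rw [mul_smul, ← hx1]⟩
    · rintro ⟨j, rfl⟩
      exact ⟨gen N j, gen_extreme hN j, rfl⟩
  have hinj : Function.Injective R := by
    intro i j hij
    have hi : gen N i ∈ R j := hij ▸ ⟨1, zero_le_one, by simp⟩
    obtain ⟨c, hc, hi⟩ := hi
    have := X_uniq hN (d := Pi.single i 1) (fun k => by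
      by_cases h : k = i
      · subst h; simp
      · simp [h]) (r := c) (i := j) (by
        rw [← gen, hi, gen, ← map_smul, ← Pi.single_smul]; simp)
    by_contra hne
    have h := congrFun this i
    rw [Pi.single_eq_same, Pi.single_eq_of_ne hne] at h
    norm_num at h
  rw [hR, Set.ncard_eq_toFinset_card', Set.toFinset_range, Finset.card_image_of_injective _ hinj]
  simp

/-- The matrix of the construction. -/
def Am (N : ℕ) : Matrix (Fin (N + 1)) (Fin (N + 1)) ℝ := LinearMap.toMatrix' (Lm N)

/-- The extra coefficient. -/
def bb (N : ℕ) : ℝ := 2 - (-1) ^ N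

lemma bb_pos : 0 < bb N := by
  rcases neg_one_pow_eq_or ℝ N with h | h <;> simp [bb, h] <;> norm_num

lemma Am_X (hN : 2 ≤ N) (c : Fin (N + 2) → ℝ) (d : Fin (N + 2) → ℝ)
    (h0 : d 0 = 2 * c (Fin.last _))
    (hs : ∀ i : Fin (N + 1), d i.succ = c i.castSucc +
      if i.val = 0 then bb N * c (Fin.last _) else 0) :
    (Am N).mulVec (X N c) = X N d := by
  have e : (Am N).mulVec (X N c) = Lm N (X N c) := by
    rw [Am, LinearMap.toMatrix'_mulVec]
  rw [e]
  have hwN : w N N = 1 := by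
    rw [w, if_neg (by omega), Even.neg_one_pow ⟨N, rfl⟩]
  have hdl : d (Fin.last (N + 1)) = c (Fin.last N).castSucc := by
    rw [← Fin.succ_last, hs, if_neg (by simp; omega), add_zero]
  ext i
  refine Fin.cases ?_ (fun k => ?_) i
  · simp only [Lm, X, LinearMap.coe_mk, AddHom.coe_mk, Fin.cases_zero, Fin.val_last, hwN, hdl]
    rw [Fin.castSucc_zero, h0]
    simp [w]
    ring
  · simp only [Lm, X, LinearMap.coe_mk, AddHom.coe_mk, Fin.cases_succ, Fin.val_last, hwN, hdl]
    rw [← Fin.succ_castSucc, hs]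
    simp only [Fin.val_castSucc, Fin.val_succ]
    have hw : w N k.val + w N (k.val + 1) = if k.val = 0 then bb N else 0 := by
      by_cases hk : k.val = 0
      · simp [w, hk, bb, pow_succ]; ring
      · simp [w, hk, ← add_assoc, pow_succ]
    have hw' : (if k.val = 0 then bb N * c (Fin.last (N + 1)) else 0)
        = (w N k.val + w N (k.val + 1)) * c (Fin.last (N + 1)) := by
      rw [hw]; split_ifs <;> simp
    rw [hw']
    ring

lemma Am_nonneg (hN : 2 ≤ N) : KNonneg (ConeGen (gen N)) (Am N) := by
  intro x hx
  rw [mem_cone] at hx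
  obtain ⟨c, hc, rfl⟩ := hx
  rw [mem_cone]
  refine ⟨Fin.cases (2 * c (Fin.last _)) (fun i : Fin (N + 1) => c i.castSucc +
      if i.val = 0 then bb N * c (Fin.last _) else 0), fun j => ?_, ?_⟩
  · have hl := hc (Fin.last _)
    have hb := bb_pos (N := N)
    refine Fin.cases ?_ (fun i => ?_) j
    · simp only [Fin.cases_zero]; positivity
    · simp only [Fin.cases_succ]
      have := hc i.castSucc
      split_ifs <;> positivity
  · exact Am_X hN _ _ (by simp) (by simp)

/-- The coefficient vectors as functions on `Fin`. -/
def Dv (N k : ℕ) : Fin (N + 2) → ℝ := fun j => D (N + 1) (bb N) k j.val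

lemma Am_pow (hN : 2 ≤ N) (k l : ℕ) : (Am N ^ k).mulVec (X N (Dv N l)) = X N (Dv N (l + k)) := by
  induction k with
  | zero => simp
  | succ k ih =>
    rw [pow_succ', ← Matrix.mulVec_mulVec, ih]
    refine Am_X hN _ _ ?_ ?_
    · rw [← add_assoc]; simp [Dv, D]
    · intro i; rw [← add_assoc]; simp [Dv, D]

lemma gen_eq (j : Fin (N + 2)) : gen N j = X N (Dv N j.val) := by
  rw [gen]
  congr 1
  ext i
  rw [Dv, D_init _ _ (by omega) (by omega), Pi.single_apply]
  simp [Fin.ext_iff]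

lemma Am_primitive (hN : 2 ≤ N) : KPrimitive (ConeGen (gen N)) (Am N) := by
  refine ⟨Am_nonneg hN, (N + 1) * (N + 1) + 1 + (N + 1), by omega, ?_⟩
  refine gen_positive (cone_proper hN) (Am_nonneg hN) rfl fun j => ?_
  rw [gen_eq, Am_pow hN, X_eq]
  exact pos_comb_int (cone_proper hN) rfl fun i =>
    D_pos bb_pos (by omega) _ (by omega) _ (by omega)

lemma int_strict {c : Fin (N + 2) → ℝ} (h : X N c ∈ interior (ConeGen (gen N))) :
    ∃ s : ℝ, ∀ j : Fin (N + 2), 0 < c j + s * al N j.val := by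
  obtain ⟨r, hr, h⟩ := dom_of_int h (X N (fun _ => 1))
  rw [mem_cone] at h
  obtain ⟨d, hd, h⟩ := h
  have h' : X N c = X N (d + fun _ => r) := by
    rw [map_add, ← h]
    have : (fun _ : Fin (N + 2) => r) = r • (fun _ => (1 : ℝ)) := by ext; simp
    rw [this, map_smul]; simp
  obtain ⟨s, hs⟩ := X_ker h'
  refine ⟨-s, fun j => ?_⟩
  rw [hs j]
  simp only [Pi.add_apply]
  have := hd j
  linarith

lemma lower_odd (hN : 2 ≤ N) (he : Even N) :
    (Am N ^ ((N + 1) * N)).mulVec (gen N 0) ∉ interior (ConeGen (gen N)) := by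
  intro h
  rw [gen_eq, Am_pow hN] at h
  obtain ⟨s, hs⟩ := int_strict h
  have h0 := hs ⟨0, by omega⟩
  have h1 := hs ⟨1, by omega⟩
  have v0 := D_vanish (n := N + 1) (b := bb N) (by omega) 0 (by omega)
  have v1 := D_vanish (n := N + 1) (b := bb N) (by omega) 1 (by omega)
  rw [Nat.add_sub_cancel] at v0 v1
  simp only [Dv, Fin.val_zero, zero_add, v0, v1, al] at h0 h1
  simp [w, pow_succ, he.neg_one_pow, show N ≠ 0 by omega] at h0 h1
  linarith

lemma lower_even (hN : 2 ≤ N) :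
    (Am N ^ ((N + 1) * N - 1)).mulVec (gen N 0) ∉ interior (ConeGen (gen N)) := by
  intro h
  rw [gen_eq, Am_pow hN] at h
  obtain ⟨s, hs⟩ := int_strict h
  have h0 := hs ⟨0, by omega⟩
  have h1 := hs ⟨N + 1, by omega⟩
  have v0 := D_vanish (n := N + 1) (b := bb N) (by omega) 0 (by omega)
  have v1 := D_vanish (n := N + 1) (b := bb N) (by omega) 1 (by omega)
  rw [Nat.add_sub_cancel] at v0 v1
  have hk : (N + 1) * N = ((N + 1) * N - 1) + 1 := by
    have : 0 < (N + 1) * N := by positivity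
    omega
  rw [hk] at v0 v1
  simp only [D, if_true] at v0 v1
  have v2 : D (N + 1) (bb N) ((N + 1) * N - 1) (N + 1) = 0 := by linarith
  rw [v2, mul_zero, add_zero] at v1
  simp only [Dv, Fin.val_zero, zero_add, v1, v2, al] at h0 h1
  simp [w] at h0 h1
  linarith

end construction

lemma expnt_eq {n : ℕ} {K : Set (Fin n → ℝ)} {A : Matrix (Fin n) (Fin n) ℝ} {M : ℕ}
    (hn : 2 ≤ n) (hK : IsProperCone K) (hA : KPrimitive K A) (hM : KPositive K (A ^ M))
    (hM0 : 0 < M) {x : Fin n → ℝ} (hx : x ∈ K) (hx0 : x ≠ 0)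
    (h : (A ^ (M - 1)).mulVec x ∉ interior K) : expnt K A = M := by
  apply le_antisymm
  · exact Nat.sInf_le ⟨hM0, hM⟩
  · refine le_csInf ⟨M, hM0, hM⟩ fun k hk => ?_
    by_contra hlt
    exact h (int_mono hK hn hA (by omega) (hk.2 x hx hx0))

end MinCone

/-- The maximum of `γ(K)` over all `n`-dimensional minimal cones (`K ∈ P(n+1,n)`)
is `n² - n + 1` if `n` is odd and `n² - n` if `n` is even. -/
theorem stmt_4 (n : ℕ) (hn : 3 ≤ n) :
    (Odd n →
      (∀ (K : Set (Fin n → ℝ)) (A : Matrix (Fin n) (Fin n) ℝ),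
        MemP (n + 1) K → KPrimitive K A → expnt K A ≤ n ^ 2 - n + 1) ∧
      (∃ (K : Set (Fin n → ℝ)) (A : Matrix (Fin n) (Fin n) ℝ),
        MemP (n + 1) K ∧ KPrimitive K A ∧ expnt K A = n ^ 2 - n + 1)) ∧
    (Even n →
      (∀ (K : Set (Fin n → ℝ)) (A : Matrix (Fin n) (Fin n) ℝ),
        MemP (n + 1) K → KPrimitive K A → expnt K A ≤ n ^ 2 - n) ∧
      (∃ (K : Set (Fin n → ℝ)) (A : Matrix (Fin n) (Fin n) ℝ),
        MemP (n + 1) K ∧ KPrimitive K A ∧ expnt K A = n ^ 2 - n)) := by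
  have hsq : n ^ 2 - n = n * (n - 1) := by rw [Nat.mul_sub, mul_one, pow_two]
  have hpos : 0 < n * (n - 1) := Nat.mul_pos (by omega) (by omega)
  refine ⟨fun ho => ⟨fun K A hK hA => ?_, ?_⟩, fun he => ⟨fun K A hK hA => ?_, ?_⟩⟩
  · exact Nat.sInf_le ⟨by omega, MinCone.upper_odd hn hK hA⟩
  · obtain ⟨N, rfl⟩ : ∃ N, n = N + 1 := ⟨n - 1, by omega⟩
    have hN : 2 ≤ N := by omega
    have hNe : Even N := by
      rw [Nat.odd_add_one] at ho
      exact Nat.not_odd_iff_even.1 ho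
    refine ⟨_, MinCone.Am N, MinCone.cone_memP hN, MinCone.Am_primitive hN, ?_⟩
    refine MinCone.expnt_eq (by omega) (MinCone.cone_proper hN) (MinCone.Am_primitive hN)
      (MinCone.upper_odd hn (MinCone.cone_memP hN) (MinCone.Am_primitive hN)) (by omega)
      (MinCone.gen_extreme hN 0).1 (MinCone.gen_extreme hN 0).2.1 ?_
    rw [hsq, Nat.add_sub_cancel, Nat.add_sub_cancel]
    exact MinCone.lower_odd hN hNe
  · exact Nat.sInf_le ⟨by omega, MinCone.upper_even hn he hK hA⟩
  · obtain ⟨N, rfl⟩ : ∃ N, n = N + 1 := ⟨n - 1, by omega⟩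
    have hN : 2 ≤ N := by omega
    refine ⟨_, MinCone.Am N, MinCone.cone_memP hN, MinCone.Am_primitive hN, ?_⟩
    refine MinCone.expnt_eq (by omega) (MinCone.cone_proper hN) (MinCone.Am_primitive hN)
      (MinCone.upper_even hn he (MinCone.cone_memP hN) (MinCone.Am_primitive hN)) (by omega)
      (MinCone.gen_extreme hN 0).1 (MinCone.gen_extreme hN 0).2.1 ?_
    rw [hsq, Nat.add_sub_cancel]
    exact MinCone.lower_even hN
end
end
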